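/- arXiv:math/0503050 — 10 statements merged into one kernel-verified Lean document; each statement's English description precedes it below -/
import Mathlib

section
/- Let d be a positive integer and let M be a matroid on a finite ground set E. Then the collection of d-Laman independent subsets of E is the collection of independent sets of a matroid on E; that is, there exists a matroid L^d(M) on ground set E such that a subset A ⊆ E is independent in L^d(M) if and only if A is d-Laman independent in M. -/
/-- The rank function of a matroid: the largest cardinality of an independent
subset of `A` (with `Set.ncard` conventions; this is the usual rank function
when the ground set is finite). -/
noncomputable def Matroid.rankFun {α : Type*} (M : Matroid α) (A : Set α) : ℕ :=
  sSup (Set.ncard '' {I : Set α | M.Indep I ∧ I ⊆ A})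

/-- For a real number `m > 1`, a subset `A` of the ground set of a matroid `M` is
`m`-Laman independent if `m * r(A') > |A'|` for every nonempty `A' ⊆ A`. -/
def Matroid.LamanIndep {α : Type*} (M : Matroid α) (m : ℝ) (A : Set α) : Prop :=
  ∀ A' ⊆ A, A'.Nonempty → (A'.ncard : ℝ) < m * (M.rankFun A' : ℝ)

/-!
For a monotone function `f : Finset α → ℤ` that is submodular on intersecting pairs, the sets `I`
with `#A ≤ f A` for all nonempty `A ⊆ I` form a matroid (Edmonds). Call a nonempty `T ⊆ I` tight if
`f T = #T`. Intersecting tight sets have a tight union, so the maximal tight sets are disjoint. If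
`{e}` is independent but `insert e I` is not, then some maximal tight `T` satisfies
`f (insert e T) ≤ f T`. So if no element of an independent set `J` can be added to `I`, then `J` is
covered by the elements of `I` in no tight set together with, for each maximal tight `T`, the
elements `e ∈ J` with `f (insert e T) ≤ f T`. There are at most `f T = #T` of the latter, hence
`#J ≤ #I`.

Because `d` is an integer, `#A < d * r(A)` means `#A ≤ d * r(A) - 1`, and the right-hand side is
such a function.
-/

open Finset

section CountMatroid

variable {α : Type*} {f : Finset α → ℤ} {I J S T : Finset α} {e : α}

/-- Independence in the matroid induced by the set function `f`. The empty set is exempt from the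
inequality, so that `f ∅` may be negative. -/
def CountIndep (f : Finset α → ℤ) (I : Finset α) : Prop :=
  ∀ ⦃A⦄, A ⊆ I → A.Nonempty → (#A : ℤ) ≤ f A

/-- The nonempty subsets of `I` that attain equality in the inequalities defining
`CountIndep f I`. -/
structure IsTightIn (f : Finset α → ℤ) (I T : Finset α) : Prop where
  subset : T ⊆ I
  nonempty : T.Nonempty
  eq_card : f T = #T

theorem countIndep_empty (f : Finset α → ℤ) : CountIndep f ∅ :=
  fun _ hA hne ↦ absurd (subset_empty.1 hA) hne.ne_empty

theorem CountIndep.subset (hJ : CountIndep f J) (hIJ : I ⊆ J) : CountIndep f I :=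
  fun _ hA ↦ hJ (hA.trans hIJ)

open scoped Classical in
/-- The family of inclusion-maximal tight subsets of `I`. -/
noncomputable def maximalTight (f : Finset α → ℤ) (I : Finset α) : Finset (Finset α) :=
  {T ∈ I.powerset | Maximal (IsTightIn f I) T}

theorem mem_maximalTight : T ∈ maximalTight f I ↔ Maximal (IsTightIn f I) T := by
  simpa [maximalTight] using fun hT : Maximal _ _ ↦ hT.prop.subset

theorem IsTightIn.exists_subset_mem_maximalTight (hT : IsTightIn f I T) :
    ∃ T' ∈ maximalTight f I, T ⊆ T' := by
  have hfin : {T | IsTightIn f I T}.Finite :=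
    I.powerset.finite_toSet.subset fun T hT ↦ mem_coe.2 (mem_powerset.2 hT.subset)
  obtain ⟨T', hTT', hT'⟩ := hfin.exists_le_maximal hT
  exact ⟨T', mem_maximalTight.2 hT', hTT'⟩

variable [DecidableEq α]

/-- Submodularity of a set function, required only for pairs of sets that intersect. -/
def IntersectingSubmodular (f : Finset α → ℤ) : Prop :=
  ∀ ⦃A B⦄, (A ∩ B).Nonempty → f (A ∩ B) + f (A ∪ B) ≤ f A + f B

theorem IsTightIn.union (hsub : IntersectingSubmodular f) (hI : CountIndep f I)
    (hS : IsTightIn f I S) (hT : IsTightIn f I T) (hST : (S ∩ T).Nonempty) :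
    IsTightIn f I (S ∪ T) := by
  have hsubset : S ∪ T ⊆ I := union_subset hS.subset hT.subset
  have hne : (S ∪ T).Nonempty := hS.nonempty.mono subset_union_left
  refine ⟨hsubset, hne, ?_⟩
  have hinter : (#(S ∩ T) : ℤ) ≤ f (S ∩ T) := hI (inter_subset_left.trans hS.subset) hST
  have hunion : (#(S ∪ T) : ℤ) ≤ f (S ∪ T) := hI hsubset hne
  have hcard := card_inter_add_card_union S T
  have hf := hsub hST
  rw [hS.eq_card, hT.eq_card] at hf
  lia

theorem pairwiseDisjoint_maximalTight (hsub : IntersectingSubmodular f) (hI : CountIndep f I) :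
    (maximalTight f I : Set (Finset α)).PairwiseDisjoint id := by
  intro S hS T hT hne
  rw [mem_coe, mem_maximalTight] at hS hT
  by_contra hdisj
  have hunion : IsTightIn f I (S ∪ T) :=
    hS.prop.union hsub hI hT.prop (not_disjoint_iff_nonempty_inter.1 hdisj)
  exact hne ((hS.eq_of_le hunion subset_union_left).trans
    (hT.eq_of_le hunion subset_union_right).symm)

theorem IntersectingSubmodular.insert_le_of_subset (hsub : IntersectingSubmodular f)
    (hmono : Monotone f) (hS : S.Nonempty) (hST : S ⊆ T) (he : f (insert e S) ≤ f S) :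
    f (insert e T) ≤ f T := by
  have hinter : S ⊆ T ∩ insert e S := subset_inter hST (subset_insert e S)
  have hunion : T ∪ insert e S = insert e T := by rw [union_insert, union_eq_left.2 hST]
  have hf := hsub (hS.mono hinter)
  rw [hunion] at hf
  linarith [hmono hinter]

theorem IntersectingSubmodular.union_le_of_forall_insert_le (hsub : IntersectingSubmodular f)
    (hmono : Monotone f) (hT : T.Nonempty) (hS : ∀ e ∈ S, f (insert e T) ≤ f T) :
    f (T ∪ S) ≤ f T := by
  induction S using Finset.induction_on with
  | empty => simp
  | insert e S _ ih =>
    rw [forall_mem_insert] at hS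
    calc f (T ∪ insert e S) = f (insert e (T ∪ S)) := by rw [union_insert]
      _ ≤ f (T ∪ S) := hsub.insert_le_of_subset hmono hT subset_union_left hS.1
      _ ≤ f T := ih hS.2

theorem CountIndep.card_le_card_of_isTightIn (hJ : CountIndep f J) (hsub : IntersectingSubmodular f)
    (hmono : Monotone f) (hT : IsTightIn f I T) (hJT : ∀ e ∈ J, f (insert e T) ≤ f T) :
    #J ≤ #T := by
  obtain rfl | hne := J.eq_empty_or_nonempty
  · simp
  have : (#J : ℤ) ≤ #T :=
    calc (#J : ℤ) ≤ f J := hJ Subset.rfl hne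
      _ ≤ f (T ∪ J) := hmono subset_union_right
      _ ≤ f T := hsub.union_le_of_forall_insert_le hmono hT.nonempty hJT
      _ = #T := hT.eq_card
  exact_mod_cast this

theorem CountIndep.exists_isTightIn_insert_le (hI : CountIndep f I) (hmono : Monotone f)
    (he : CountIndep f {e}) (hIe : ¬ CountIndep f (insert e I)) :
    ∃ T, IsTightIn f I T ∧ f (insert e T) ≤ f T := by
  obtain ⟨A, hA, hAne, hlt⟩ : ∃ A ⊆ insert e I, A.Nonempty ∧ f A < #A := by
    simpa [CountIndep] using hIe
  have heA : e ∈ A := by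
    by_contra heA
    exact hlt.not_ge (hI ((subset_insert_iff_of_notMem heA).1 hA) hAne)
  have hsubset : A.erase e ⊆ I := subset_insert_iff.1 hA
  have hne : (A.erase e).Nonempty := by
    rw [nonempty_iff_ne_empty, Ne, erase_eq_empty_iff]
    rintro (rfl | rfl)
    · exact hAne.ne_empty rfl
    · exact hlt.not_ge (he Subset.rfl hAne)
  have hcard : #(A.erase e) + 1 = #A := card_erase_add_one heA
  have hle : (#(A.erase e) : ℤ) ≤ f (A.erase e) := hI hsubset hne
  have hfA : f (A.erase e) ≤ f A := hmono (erase_subset e A)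
  refine ⟨A.erase e, ⟨hsubset, hne, by lia⟩, ?_⟩
  rw [insert_erase heA]
  lia

theorem CountIndep.exists_mem_maximalTight_insert_le (hI : CountIndep f I)
    (hsub : IntersectingSubmodular f) (hmono : Monotone f) (he : CountIndep f {e})
    (hIe : ¬ CountIndep f (insert e I)) :
    ∃ T ∈ maximalTight f I, f (insert e T) ≤ f T := by
  obtain ⟨S, hS, hSe⟩ := hI.exists_isTightIn_insert_le hmono he hIe
  obtain ⟨T, hT, hST⟩ := hS.exists_subset_mem_maximalTight
  exact ⟨T, hT, hsub.insert_le_of_subset hmono hS.nonempty hST hSe⟩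

theorem CountIndep.exists_insert_of_card_lt (hI : CountIndep f I) (hJ : CountIndep f J)
    (hsub : IntersectingSubmodular f) (hmono : Monotone f) (hlt : #I < #J) :
    ∃ e ∈ J, e ∉ I ∧ CountIndep f (insert e I) := by
  by_contra! hdep
  let covered := (maximalTight f I).biUnion id
  let spanned (T : Finset α) : Finset α := {e ∈ J | f (insert e T) ≤ f T}
  have hcover : J ⊆ (I \ covered) ∪ (maximalTight f I).biUnion spanned := by
    intro e heJ
    by_cases heU : e ∈ I \ covered
    · exact mem_union_left _ heU
    obtain ⟨T, hT, heT⟩ : ∃ T ∈ maximalTight f I, f (insert e T) ≤ f T := by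
      by_cases heI : e ∈ I
      · obtain ⟨T, hT, heT⟩ : ∃ T ∈ maximalTight f I, e ∈ T := by simpa [covered, heI] using heU
        exact ⟨T, hT, by rw [insert_eq_of_mem heT]⟩
      · exact hI.exists_mem_maximalTight_insert_le hsub hmono
          (hJ.subset (singleton_subset_iff.2 heJ)) (hdep e heJ heI)
    exact mem_union_right _ (mem_biUnion.2 ⟨T, hT, mem_filter.2 ⟨heJ, heT⟩⟩)
  have hspanned : ∀ T ∈ maximalTight f I, #(spanned T) ≤ #T := fun T hT ↦
    (hJ.subset (filter_subset _ J)).card_le_card_of_isTightIn hsub hmono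
      (mem_maximalTight.1 hT).prop fun e he ↦ (mem_filter.1 he).2
  have hcovered : covered ⊆ I := biUnion_subset.2 fun T hT ↦ (mem_maximalTight.1 hT).prop.subset
  refine hlt.not_ge ?_
  calc #J ≤ #(I \ covered) + #((maximalTight f I).biUnion spanned) :=
        (card_le_card hcover).trans (card_union_le _ _)
    _ ≤ #(I \ covered) + ∑ T ∈ maximalTight f I, #T := by
        gcongr
        exact card_biUnion_le.trans (sum_le_sum hspanned)
    _ = #(I \ covered) + #covered := by
        rw [card_biUnion (pairwiseDisjoint_maximalTight hsub hI)]; rfl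
    _ = #I := card_sdiff_add_card_eq_card hcovered

/-- The matroid on `E` whose finite independent sets are the sets `I ⊆ E` with `CountIndep f I`.
On infinite sets, independence is decided by the finite subsets. -/
def countMatroid (E : Set α) (hsub : IntersectingSubmodular f) (hmono : Monotone f) : Matroid α :=
  (IndepMatroid.ofFinset E (fun I ↦ (I : Set α) ⊆ E ∧ CountIndep f I)
    (indep_empty := ⟨by simp, countIndep_empty f⟩)
    (indep_subset := fun _ _ hJ hIJ ↦ ⟨(coe_subset.2 hIJ).trans hJ.1, hJ.2.subset hIJ⟩)
    (indep_aug := fun _ _ hI hJ hlt ↦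
      have ⟨e, heJ, heI, hIe⟩ := hI.2.exists_insert_of_card_lt hJ.2 hsub hmono hlt
      ⟨e, heJ, heI, by simpa using Set.insert_subset (hJ.1 heJ) hI.1, hIe⟩)
    (subset_ground := fun _ hI ↦ hI.1)).matroid

theorem countMatroid_ground (E : Set α) (hsub : IntersectingSubmodular f) (hmono : Monotone f) :
    (countMatroid E hsub hmono).E = E := rfl

theorem finitary_countMatroid (E : Set α) (hsub : IntersectingSubmodular f) (hmono : Monotone f) :
    (countMatroid E hsub hmono).Finitary :=
  IndepMatroid.ofFinitaryCardAugment_finitary ..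

theorem countMatroid_indep_coe_iff {E : Set α} {hsub : IntersectingSubmodular f}
    {hmono : Monotone f} :
    (countMatroid E hsub hmono).Indep I ↔ (I : Set α) ⊆ E ∧ CountIndep f I := by
  rw [countMatroid, IndepMatroid.matroid_indep_iff, IndepMatroid.ofFinset_indep]

end CountMatroid

section Laman

variable {α : Type*} {M : Matroid α} {A B : Set α}

theorem cast_rankFun_eq_eRk (hA : M.IsRkFinite A) : (M.rankFun A : ℕ∞) = M.eRk A := by
  obtain ⟨I, hI, hIfin⟩ := hA.exists_finite_isBasis'
  have hgreatest : IsGreatest (Set.ncard '' {K | M.Indep K ∧ K ⊆ A}) I.ncard := by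
    refine ⟨⟨I, ⟨hI.indep, hI.subset⟩, rfl⟩, ?_⟩
    rintro _ ⟨K, ⟨hK, hKA⟩, rfl⟩
    have hle : K.encard ≤ I.encard := hI.encard_eq_eRk ▸ hK.encard_le_eRk_of_subset hKA
    exact ENat.toNat_le_toNat hle hIfin.encard_lt_top.ne
  rw [Matroid.rankFun, hgreatest.csSup_eq, hIfin.cast_ncard_eq, hI.encard_eq_eRk]

theorem rankFun_mono_of_isRkFinite (hB : M.IsRkFinite B) (hAB : A ⊆ B) :
    M.rankFun A ≤ M.rankFun B := by
  have := M.eRk_mono hAB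
  rwa [← cast_rankFun_eq_eRk hB, ← cast_rankFun_eq_eRk (hB.subset hAB), Nat.cast_le] at this

theorem rankFun_inter_add_rankFun_union_le (hA : M.IsRkFinite A) (hB : M.IsRkFinite B) :
    M.rankFun (A ∩ B) + M.rankFun (A ∪ B) ≤ M.rankFun A + M.rankFun B := by
  have := M.eRk_inter_add_eRk_union_le A B
  rw [← cast_rankFun_eq_eRk hA, ← cast_rankFun_eq_eRk hB, ← cast_rankFun_eq_eRk hA.inter_right,
    ← cast_rankFun_eq_eRk (hA.union hB)] at this
  exact_mod_cast this

variable (M) (d : ℕ)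

/-- The largest size that the definition of `d`-Laman independence allows for a nonempty set `A`,
namely `d * r(A) - 1`. It is integer-valued to avoid truncated subtraction on sets of rank zero. -/
noncomputable def lamanBound (A : Finset α) : ℤ := d * M.rankFun A - 1

theorem lamanBound_mono : Monotone (lamanBound M d) := fun _ B hAB ↦ by
  have hrank := rankFun_mono_of_isRkFinite (M.isRkFinite_of_finite B.finite_toSet)
    (coe_subset.2 hAB)
  unfold lamanBound
  gcongr

theorem intersectingSubmodular_lamanBound [DecidableEq α] :
    IntersectingSubmodular (lamanBound M d) := fun A B _ ↦ by
  have hrank := rankFun_inter_add_rankFun_union_le (M.isRkFinite_of_finite A.finite_toSet)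
    (M.isRkFinite_of_finite B.finite_toSet)
  have hmul := Nat.mul_le_mul_left d hrank
  simp only [lamanBound, coe_inter, coe_union]
  lia

theorem lamanIndep_coe_iff_countIndep {A : Finset α} :
    M.LamanIndep d A ↔ CountIndep (lamanBound M d) A := by
  have hbound (B : Finset α) :
      ((B : Set α).ncard : ℝ) < d * (M.rankFun B : ℝ) ↔ (#B : ℤ) ≤ lamanBound M d B := by
    rw [Set.ncard_coe_finset, lamanBound, Int.le_sub_one_iff]
    norm_cast
  refine ⟨fun h B hB hne ↦ (hbound B).1 (h B (coe_subset.2 hB) (coe_nonempty.2 hne)),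
    fun h B hB hne ↦ ?_⟩
  lift B to Finset α using A.finite_toSet.subset hB
  exact (hbound B).2 (h (coe_subset.1 hB) (coe_nonempty.1 hne))

end Laman

/-- Infinite sets `A` are left out because `Set.ncard` and `Matroid.rankFun` can return the junk
value `0` on infinite sets. -/
theorem lamanComplex_matroidal_general {α : Type*} (M : Matroid α) (d : ℕ) :
    ∃ N : Matroid α, N.E = M.E ∧ N.Finitary ∧
      ∀ A ⊆ M.E, A.Finite → (N.Indep A ↔ M.LamanIndep d A) := by
  classical
  have hsub := intersectingSubmodular_lamanBound M d
  have hmono := lamanBound_mono M d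
  refine ⟨countMatroid M.E hsub hmono, countMatroid_ground _ hsub hmono,
    finitary_countMatroid _ hsub hmono, fun A hAE hA ↦ ?_⟩
  lift A to Finset α using hA
  rw [countMatroid_indep_coe_iff, lamanIndep_coe_iff_countIndep, and_iff_right hAE]

/-- **Theorem (Laman complex is matroidal for integer `d`).**
Let `d` be a positive integer and `M` a matroid on a finite ground set `E`.
Then there is a matroid on the same ground set whose independent sets are
exactly the `d`-Laman independent subsets of `E`. -/
theorem lamanComplex_matroidal {α : Type*} (M : Matroid α) (hfin : M.E.Finite)
    (d : ℕ) (hd : 0 < d) :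
    ∃ N : Matroid α, N.E = M.E ∧
      ∀ A ⊆ M.E, (N.Indep A ↔ M.LamanIndep (d : ℝ) A) := by
  obtain ⟨N, hE, -, hN⟩ := lamanComplex_matroidal_general M d
  exact ⟨N, hE, fun A hA ↦ hN A hA (hfin.subset hA)⟩
end

section
/- Let m > 1 be a real number which is not an integer, and let c = ⌊m⌋ be the greatest integer ≤ m. Then there exist positive integers a and b such that (a − 1)/b < (2a − c − 1)/(2b − 1) < m ≤ a/b. -/
/-!
Put `c = ⌊m⌋`, `e = c + 1 - m` and `a = ⌈b * m⌉`. Then `m ≤ a / b` is automatic, the leftmost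
inequality amounts to `b * c + 1 < a + b`, which holds for `b ≥ 2`, and the middle one amounts to
`a - b * m < e / 2`. As `b * e` and `-(b * m)` differ by an integer, the latter says
`fract (b * e) < e / 2`. To find such a `b`, choose a multiple `q * e` lying a distance
`0 < d ≤ e` below an integer: subtracting `d` from `e` as often as possible is, modulo `1`, adding
`q * e` to `e` each time, and it leaves the remainder of `e` modulo `d`, which is less than `e / 2`.
-/

section OrderedRing

variable {R : Type*} [Ring R] [LinearOrder R] [IsStrictOrderedRing R]

lemma two_mul_fract_lt_self [FloorRing R] {t : R} (ht : 1 ≤ t) : 2 * Int.fract t < t := by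
  have one_le_floor : (1 : R) ≤ ⌊t⌋ := mod_cast Int.le_floor.mpr (mod_cast ht)
  calc 2 * Int.fract t = Int.fract t + Int.fract t := two_mul _
    _ < ⌊t⌋ + Int.fract t := by gcongr; exact (Int.fract_lt_one t).trans_le one_le_floor
    _ = t := Int.floor_add_fract t

lemma fract_le_self_of_nonneg [FloorRing R] {t : R} (ht : 0 ≤ t) : Int.fract t ≤ t :=
  sub_le_self t (mod_cast Int.floor_nonneg.mpr ht)

lemma exists_ge_sub_mul_mem_Ioc [Archimedean R] {e : R} (he : 0 < e) (n : ℕ) :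
    ∃ q ≥ n, ∃ N : ℤ, N - q * e ∈ Set.Ioc 0 e := by
  obtain ⟨N, hN⟩ := exists_int_ge ((n + 1) * e)
  obtain ⟨q, hq, -⟩ := existsUnique_sub_zsmul_mem_Ioc he (N : R) 0
  rw [zsmul_eq_mul, zero_add] at hq
  have n_le_q : (n : ℤ) ≤ q := by
    have succ_mul_le : (n + 1) * e ≤ (q + 1) * e :=
      calc (n + 1) * e ≤ N := hN
        _ ≤ e + q * e := sub_le_iff_le_add.mp hq.2
        _ = (q + 1) * e := by rw [add_one_mul, add_comm]
    exact_mod_cast (add_le_add_iff_right 1).mp (le_of_mul_le_mul_right succ_mul_le he)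
  lift q to ℕ using by lia
  exact ⟨q, mod_cast n_le_q, N, mod_cast hq⟩

end OrderedRing

section OrderedField

variable {K : Type*} [Field K] [LinearOrder K] [IsStrictOrderedRing K] [FloorRing K]

lemma exists_gt_fract_mul_lt_half {e : K} (he : 0 < e) (n : ℕ) :
    ∃ b > n, Int.fract (b * e) < e / 2 := by
  obtain ⟨q, n_le_q, N, d_pos, d_le⟩ := exists_ge_sub_mul_mem_Ioc he n
  obtain ⟨d, hd⟩ : ∃ d : K, d = N - q * e := ⟨_, rfl⟩
  rw [← hd] at d_pos d_le
  have one_le_div : 1 ≤ e / d := (one_le_div₀ d_pos).mpr d_le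
  have one_le_floor : 1 ≤ ⌊e / d⌋₊ := (Nat.one_le_floor_iff _).mpr one_le_div
  have remainder : Int.fract (e / d) * d + ⌊e / d⌋₊ * d = e := by
    rw [natCast_floor_eq_intCast_floor (by positivity), ← add_mul, Int.fract_add_floor,
      div_mul_cancel₀ _ d_pos.ne']
  have mul_eq : ((1 + ⌊e / d⌋₊ * q : ℕ) : K) * e =
      Int.fract (e / d) * d + (⌊e / d⌋₊ * N : ℤ) := by
    push_cast
    linear_combination -remainder + ⌊e / d⌋₊ * hd
  refine ⟨1 + ⌊e / d⌋₊ * q, by nlinarith, ?_⟩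
  calc Int.fract (((1 + ⌊e / d⌋₊ * q : ℕ) : K) * e)
      = Int.fract (Int.fract (e / d) * d) := by rw [mul_eq, Int.fract_add_intCast]
    _ ≤ Int.fract (e / d) * d :=
        fract_le_self_of_nonneg (mul_nonneg (Int.fract_nonneg _) d_pos.le)
    _ < e / d / 2 * d := by
        gcongr
        exact (lt_div_iff₀' two_pos).mpr (two_mul_fract_lt_self one_le_div)
    _ = e / 2 := by field_simp

lemma exists_gt_ceil_mul_sub_lt (m : K) (n : ℕ) :
    ∃ b > n, ⌈b * m⌉ - b * m < (⌊m⌋ + 1 - m) / 2 := by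
  obtain ⟨b, hb, hfract⟩ :=
    exists_gt_fract_mul_lt_half (sub_pos.mpr (Int.lt_floor_add_one m)) n
  have fract_eq : Int.fract (b * (⌊m⌋ + 1 - m)) = ⌈b * m⌉ - b * m :=
    calc Int.fract (b * (⌊m⌋ + 1 - m))
        = Int.fract (-(b * m) + (b * (⌊m⌋ + 1) : ℤ)) := by push_cast; ring_nf
      _ = Int.fract (-(b * m)) := Int.fract_add_intCast _ _
      _ = ⌈b * m⌉ - b * m := by rw [Int.fract, Int.floor_neg]; push_cast; ring
  exact ⟨b, hb, fract_eq ▸ hfract⟩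

theorem interval_exhaustion_general (m : K) :
    ∃ (a : ℤ) (b : ℕ), 0 < b ∧
      ((a : K) - 1) / b < (2 * a - ⌊m⌋ - 1) / (2 * b - 1) ∧
      (2 * (a : K) - ⌊m⌋ - 1) / (2 * b - 1) < m ∧
      m ≤ (a : K) / b := by
  obtain ⟨b, one_lt_b, ceil_sub_lt⟩ := exists_gt_ceil_mul_sub_lt m 1
  have one_lt_cast : (1 : K) < b := mod_cast one_lt_b
  have b_pos : (0 : K) < b := by linarith
  have denom_pos : (0 : K) < 2 * b - 1 := by linarith
  have mul_floor_le_ceil : b * (⌊m⌋ : K) ≤ ⌈b * m⌉ :=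
    (mul_le_mul_of_nonneg_left (Int.floor_le m) b_pos.le).trans (Int.le_ceil _)
  refine ⟨⌈b * m⌉, b, by lia, ?_, ?_, ?_⟩
  · have : b * (⌊m⌋ : K) + 1 < ⌈b * m⌉ + b := by linarith
    rw [div_lt_div_iff₀ b_pos denom_pos]
    linarith
  · rw [div_lt_iff₀ denom_pos]
    linarith
  · exact (le_div_iff₀' b_pos).mpr (Int.le_ceil _)

end OrderedField

/-- **Numerical lemma (interval exhaustion).**
Let `m > 1` be a real number which is not an integer and let `c = ⌊m⌋`.
Then there exist positive integers `a, b` with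
`(a − 1)/b < (2a − c − 1)/(2b − 1) < m ≤ a/b`. -/
theorem interval_exhaustion (m : ℝ) (hm : 1 < m) (hni : ∀ z : ℤ, (z : ℝ) ≠ m) :
    ∃ a b : ℕ, 0 < a ∧ 0 < b ∧
      ((a : ℝ) - 1) / (b : ℝ) < (2 * (a : ℝ) - (⌊m⌋ : ℝ) - 1) / (2 * (b : ℝ) - 1) ∧
      (2 * (a : ℝ) - (⌊m⌋ : ℝ) - 1) / (2 * (b : ℝ) - 1) < m ∧
      m ≤ (a : ℝ) / (b : ℝ) := by
  obtain ⟨a, b, b_pos, left_lt, mid_lt, m_le⟩ := interval_exhaustion_general m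
  have quotient_pos : (0 : ℝ) < a / b := by linarith
  have a_pos : 0 < a := mod_cast (div_pos_iff_of_pos_right (mod_cast b_pos)).mp quotient_pos
  lift a to ℕ using a_pos.le
  exact ⟨a, b, mod_cast a_pos, b_pos, left_lt, mid_lt, m_le⟩
end

section
/- Let M be a matroid on a finite ground set E with rank function r, and fix a real number m > 1. For real q > 1 define T(q) = Σ_{A ⊆ E} (q^{m−1} − 1)^{r(E) − r(A)} · (q − 1)^{|A| − r(A)}, where real powers q^{m−1} are defined via the real exponential. Then the full ground set E is m-Laman independent if and only if T(q)/q^{(m−1)·r(E)} tends to 1 as q → ∞ (i.e., the 'generalized polynomial' T_M(q^{m−1}, q) is monic of degree (m−1)·r(M)). -/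
open Filter

/-- The corank-nullity evaluation
`T(q) = T_M(q^{m-1}, q) = Σ_{A ⊆ E} (q^{m-1} - 1)^{r(E) - r(A)} (q - 1)^{|A| - r(A)}`,
where `q^{m-1}` is a real power. -/
noncomputable def tutteEval {α : Type*} [Fintype α] (M : Matroid α) (m q : ℝ) : ℝ :=
  ∑ A : Finset α,
    (q ^ (m - 1) - 1) ^ (M.rankFun Set.univ - M.rankFun (A : Set α)) *
      (q - 1) ^ (A.card - M.rankFun (A : Set α))

/-!
The summand of `A` is a product of powers of `q ^ (m - 1) - 1 ~ q ^ (m - 1)` and `q - 1 ~ q`, so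
after division by `q ^ ((m - 1) * r E)` it is asymptotically equivalent to `q ^ (|A| - m * r A)`.
The empty set contributes `1` in the limit, and all other summands are eventually nonnegative, so no
cancellation can occur: the quotient tends to `1` exactly when each of them tends to `0`, that is,
when each exponent `|A| - m * r A` with `A` nonempty is negative.
-/

section PowerAsymptotics

open Asymptotics
open scoped Topology

theorem tendsto_sum_nhds_zero_iff_of_nonneg {ι β M : Type*} [AddCommMonoid M] [PartialOrder M]
    [IsOrderedAddMonoid M] [TopologicalSpace M] [OrderTopology M] [ContinuousAdd M]
    {l : Filter β} {s : Finset ι} {f : ι → β → M} (hf : ∀ i ∈ s, ∀ᶠ x in l, 0 ≤ f i x) :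
    Tendsto (fun x ↦ ∑ i ∈ s, f i x) l (𝓝 0) ↔ ∀ i ∈ s, Tendsto (f i) l (𝓝 0) := by
  refine ⟨fun h i hi ↦ ?_, fun h ↦ by simpa using tendsto_finsetSum s h⟩
  refine tendsto_of_tendsto_of_tendsto_of_le_of_le' tendsto_const_nhds h (hf i hi) ?_
  filter_upwards [(eventually_all_finset s).2 hf] with x hx
  exact Finset.single_le_sum hx hi

theorem tendsto_rpow_atTop_nhds_zero_iff {e : ℝ} :
    Tendsto (fun q : ℝ ↦ q ^ e) atTop (𝓝 0) ↔ e < 0 := by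
  refine ⟨fun h ↦ ?_, fun he ↦ by simpa using tendsto_rpow_neg_atTop (neg_pos.2 he)⟩
  by_contra! he
  have one_le : ∀ᶠ q : ℝ in atTop, 1 ≤ q ^ e := by
    filter_upwards [eventually_ge_atTop 1] with q hq using Real.one_le_rpow hq he
  exact zero_lt_one.not_ge (ge_of_tendsto h one_le)

theorem tendsto_sum_iff_forall_exponent_neg {ι : Type*} [DecidableEq ι] {s : Finset ι}
    {f : ι → ℝ → ℝ} {e : ι → ℝ} {a : ℝ} {i₀ : ι} (hi₀ : i₀ ∈ s)
    (hf₀ : Tendsto (f i₀) atTop (𝓝 a))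
    (hf : ∀ i ∈ s.erase i₀, f i ~[atTop] fun q ↦ q ^ e i) :
    Tendsto (fun q ↦ ∑ i ∈ s, f i q) atTop (𝓝 a) ↔ ∀ i ∈ s.erase i₀, e i < 0 := by
  have nonneg : ∀ i ∈ s.erase i₀, ∀ᶠ q in atTop, 0 ≤ f i q := fun i hi ↦
    (hf i hi).eventually_nonneg <|
      (eventually_ge_atTop 0).mono fun _ hq ↦ Real.rpow_nonneg hq _
  calc
    _ ↔ Tendsto (fun q ↦ ∑ i ∈ s.erase i₀, f i q) atTop (𝓝 0) := by
      simp only [← Finset.add_sum_erase s _ hi₀]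
      exact ⟨fun h ↦ by simpa using h.sub hf₀, fun h ↦ by simpa using hf₀.add h⟩
    _ ↔ ∀ i ∈ s.erase i₀, Tendsto (f i) atTop (𝓝 0) :=
      tendsto_sum_nhds_zero_iff_of_nonneg nonneg
    _ ↔ ∀ i ∈ s.erase i₀, e i < 0 :=
      forall₂_congr fun i hi ↦
        (hf i hi).tendsto_nhds_iff.trans tendsto_rpow_atTop_nhds_zero_iff

theorem isEquivalent_rpow_sub_one_pow {s : ℝ} (hs : 0 < s) (n : ℕ) :
    (fun q : ℝ ↦ (q ^ s - 1) ^ n) ~[atTop] fun q ↦ q ^ (s * n) := by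
  have sub_one : (fun q : ℝ ↦ q ^ s - 1) ~[atTop] fun q ↦ q ^ s := by
    simpa only [sub_eq_add_neg] using
      (IsEquivalent.refl (u := fun q : ℝ ↦ q ^ s)).add_const_of_norm_tendsto_atTop (c := -1)
        (tendsto_norm_atTop_atTop.comp (tendsto_rpow_atTop hs))
  refine (sub_one.pow n).trans_eventuallyEq ?_
  filter_upwards [eventually_ge_atTop 0] with q hq
  exact (Real.rpow_mul_natCast hq s n).symm

theorem isEquivalent_corankNullity_term_div {m : ℝ} (hm : 1 < m) {R r n : ℕ} (hrR : r ≤ R)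
    (hrn : r ≤ n) :
    (fun q : ℝ ↦ (q ^ (m - 1) - 1) ^ (R - r) * (q - 1) ^ (n - r) / q ^ ((m - 1) * R))
      ~[atTop] fun q ↦ q ^ (n - m * r) := by
  have corank := isEquivalent_rpow_sub_one_pow (sub_pos.2 hm) (R - r)
  have nullity := isEquivalent_rpow_sub_one_pow one_pos (n - r)
  simp only [Real.rpow_one] at nullity
  refine ((corank.mul nullity).div IsEquivalent.refl).trans_eventuallyEq ?_
  filter_upwards [eventually_gt_atTop 0] with q hq
  simp only [Pi.mul_apply, Pi.div_apply, ← Real.rpow_add hq, ← Real.rpow_sub hq]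
  congr 1
  push_cast [hrR, hrn]
  ring

end PowerAsymptotics

section RankFunction

variable {α : Type*} {M : Matroid α} {A B : Set α}

theorem ncard_mem_upperBounds_indep_subsets (hB : B.Finite) :
    B.ncard ∈ upperBounds (Set.ncard '' {I : Set α | M.Indep I ∧ I ⊆ B}) := by
  rintro _ ⟨I, ⟨-, hIB⟩, rfl⟩
  exact Set.ncard_le_ncard hIB hB

theorem image_ncard_indep_subsets_nonempty :
    (Set.ncard '' {I : Set α | M.Indep I ∧ I ⊆ A}).Nonempty :=
  ⟨_, ∅, ⟨M.empty_indep, Set.empty_subset _⟩, rfl⟩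

theorem rankFun_le_ncard (hA : A.Finite) : M.rankFun A ≤ A.ncard :=
  csSup_le image_ncard_indep_subsets_nonempty (ncard_mem_upperBounds_indep_subsets hA)

theorem rankFun_coe_le_card (A : Finset α) : M.rankFun A ≤ A.card := by
  simpa only [Set.ncard_coe_finset] using rankFun_le_ncard A.finite_toSet

theorem rankFun_mono (hB : B.Finite) (hAB : A ⊆ B) : M.rankFun A ≤ M.rankFun B :=
  csSup_le_csSup ⟨_, ncard_mem_upperBounds_indep_subsets hB⟩ image_ncard_indep_subsets_nonempty
    (Set.image_mono fun _ hI ↦ ⟨hI.1, hI.2.trans hAB⟩)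

theorem lamanIndep_iff_forall_finset (hA : A.Finite) {m : ℝ} :
    M.LamanIndep m A ↔
      ∀ B : Finset α, ↑B ⊆ A → B.Nonempty → (B.card : ℝ) < m * M.rankFun B := by
  refine ⟨fun h B hBA hB ↦ by simpa using h B hBA hB, fun h B hBA hB ↦ ?_⟩
  lift B to Finset α using hA.subset hBA
  simpa using h B hBA hB

end RankFunction

section CorankNullity

open scoped Finset Topology

/-- The corank-nullity sum `∑ A, (x - 1) ^ (r E - r A) * (y - 1) ^ (|A| - r A)` of an arbitrary
function `r` on the subsets of `E = univ`; it is the Tutte polynomial when `r` is the rank function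
of a matroid. The exponents are truncated subtractions. -/
noncomputable def corankNullitySum {α : Type*} [Fintype α] (r : Finset α → ℕ) (x y : ℝ) : ℝ :=
  ∑ A, (x - 1) ^ (r Finset.univ - r A) * (y - 1) ^ (#A - r A)

theorem tutteEval_eq_corankNullitySum {α : Type*} [Fintype α] (M : Matroid α) (m q : ℝ) :
    tutteEval M m q = corankNullitySum (fun A : Finset α ↦ M.rankFun A) (q ^ (m - 1)) q := by
  simp only [tutteEval, corankNullitySum, Finset.coe_univ]

theorem laman_iff_tutte_monic_general {α : Type*} [Fintype α] {r : Finset α → ℕ}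
    (r_le_card : ∀ A, r A ≤ #A) (r_le_univ : ∀ A, r A ≤ r Finset.univ) {m : ℝ} (hm : 1 < m) :
    (∀ A : Finset α, A.Nonempty → (#A : ℝ) < m * r A) ↔
      Tendsto (fun q : ℝ ↦ corankNullitySum r (q ^ (m - 1)) q / q ^ ((m - 1) * r Finset.univ))
        atTop (𝓝 1) := by
  classical
  have term_equiv (A : Finset α) :=
    isEquivalent_corankNullity_term_div hm (r_le_univ A) (r_le_card A)
  have r_empty : r ∅ = 0 := by simpa using r_le_card ∅
  have empty_term := ((term_equiv ∅).tendsto_nhds_iff (c := 1)).2 (by simp [r_empty])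
  simp only [corankNullitySum, Finset.sum_div]
  rw [tendsto_sum_iff_forall_exponent_neg (Finset.mem_univ ∅) empty_term fun A _ ↦ term_equiv A]
  simp only [Finset.mem_erase, Finset.mem_univ, and_true, sub_neg, Finset.nonempty_iff_ne_empty]

end CorankNullity

/-- **Proposition.**  For a matroid `M` on a finite ground set `E` (here `E = univ`)
and a real number `m > 1`, the ground set `E` is `m`-Laman independent if and only if
the Tutte specialization `T_M(q^{m-1}, q)` is monic of degree `(m-1)·r(M)`, i.e.
`T_M(q^{m-1},q)/q^{(m-1)·r(M)} → 1` as `q → ∞`. -/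
theorem laman_iff_tutte_monic {α : Type*} [Fintype α] (M : Matroid α)
    (hE : M.E = Set.univ) (m : ℝ) (hm : 1 < m) :
    M.LamanIndep m Set.univ ↔
      Tendsto (fun q : ℝ =>
          tutteEval M m q / q ^ ((m - 1) * (M.rankFun Set.univ : ℝ)))
        atTop (nhds 1) := by
  simpa [lamanIndep_iff_forall_finset Set.finite_univ, tutteEval_eq_corankNullitySum] using
    laman_iff_tutte_monic_general (r := fun A : Finset α ↦ M.rankFun A) rankFun_coe_le_card
      (fun A ↦ rankFun_mono (Finset.finite_toSet _) (Finset.coe_subset.2 A.subset_univ)) hm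
end

section
/- Let M be a loopless matroid on a finite ground set E = {1,…,n} with rank function r, and let m > 1 be a real number. Then there exists a function ρ : 2^E → ℝ_{≥0} which is monotone (ρ(A) ≤ ρ(B) whenever A ⊆ B), submodular (ρ(A ∪ B) + ρ(A ∩ B) ≤ ρ(A) + ρ(B) for all A, B ⊆ E), and normalized (ρ(∅) = 0), such that for every A ⊆ E: A is m-Laman independent if and only if the characteristic vector of A is an independent vector of the polymatroid of ρ, i.e., |A ∩ B| ≤ ρ(B) for every subset B ⊆ E. -/
/-!
Put `f = m * r`. Only finitely many inequalities `|A| < f A` occur, so those that hold survive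
replacing `f` by `ρ = t * f` for some `t < 1` close to `1`. Conversely, `|A| ≤ t * f A` with `A`
nonempty forces `f A > 0`, and hence `|A| < f A`.
-/

section Polymatroid

open Filter Set Topology

variable {α : Type*}

/-- The rank function of a polymatroid on `α`: a normalized, monotone, submodular set function,
not assumed to be integral. Nonnegativity is derived, see `IsPolymatroidRank.nonneg`. -/
structure IsPolymatroidRank (ρ : Set α → ℝ) : Prop where
  mono : Monotone ρ
  submod : ∀ A B, ρ (A ∪ B) + ρ (A ∩ B) ≤ ρ A + ρ B
  empty : ρ ∅ = 0

namespace IsPolymatroidRank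

variable {ρ : Set α → ℝ}

lemma nonneg (hρ : IsPolymatroidRank ρ) (A : Set α) : 0 ≤ ρ A :=
  hρ.empty.symm.le.trans (hρ.mono A.empty_subset)

lemma const_mul (hρ : IsPolymatroidRank ρ) {c : ℝ} (hc : 0 ≤ c) :
    IsPolymatroidRank fun A ↦ c * ρ A where
  mono := hρ.mono.const_mul hc
  submod A B := by
    simpa only [mul_add] using mul_le_mul_of_nonneg_left (hρ.submod A B) hc
  empty := by rw [hρ.empty, mul_zero]

end IsPolymatroidRank

lemma rankFun_cast_eq_eRk {M : Matroid α} {A : Set α} (hA : M.IsRkFinite A) :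
    (M.rankFun A : ℕ∞) = M.eRk A := by
  have finite_of_indep {J : Set α} (hJ : M.Indep J) (hJA : J ⊆ A) : J.Finite :=
    hJ.finite_of_subset_isRkFinite hJA hA
  obtain ⟨I, hI⟩ := M.exists_isBasis' A
  have hI_fin : I.Finite := finite_of_indep hI.indep hI.subset
  have hI_max : IsGreatest (ncard '' {J : Set α | M.Indep J ∧ J ⊆ A}) I.ncard := by
    refine ⟨mem_image_of_mem _ ⟨hI.indep, hI.subset⟩, ?_⟩
    rintro _ ⟨J, ⟨hJ, hJA⟩, rfl⟩
    have hJI : J.encard ≤ I.encard :=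
      (hJ.encard_le_eRk_of_subset hJA).trans_eq hI.encard_eq_eRk.symm
    rw [← (finite_of_indep hJ hJA).cast_ncard_eq, ← hI_fin.cast_ncard_eq] at hJI
    exact_mod_cast hJI
  rw [Matroid.rankFun, hI_max.csSup_eq, hI_fin.cast_ncard_eq, hI.encard_eq_eRk]

lemma isPolymatroidRank_rankFun (M : Matroid α) [M.RankFinite] :
    IsPolymatroidRank fun A ↦ (M.rankFun A : ℝ) := by
  have cast_rankFun (A : Set α) : (M.rankFun A : ℕ∞) = M.eRk A :=
    rankFun_cast_eq_eRk (M.isRkFinite_set A)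
  refine ⟨fun A B hAB ↦ ?_, fun A B ↦ ?_, ?_⟩
  · have h := M.eRk_mono hAB
    simp only [← cast_rankFun] at h
    exact_mod_cast h
  · have h := M.eRk_submod A B
    simp only [← cast_rankFun] at h
    rw [add_comm]
    exact_mod_cast h
  · have h := M.eRk_empty
    rw [← cast_rankFun] at h
    exact_mod_cast h

lemma exists_scale_forall_lt_mul {ι : Type*} [Finite ι] (a b : ι → ℝ) :
    ∃ t : ℝ, 0 < t ∧ t < 1 ∧ ∀ i, a i < b i → a i < t * b i := by
  have lt_mul_near_one (i : ι) : ∀ᶠ t in 𝓝[<] (1 : ℝ), a i < b i → a i < t * b i := by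
    refine eventually_imp_distrib_left.2 fun hi ↦ ?_
    have tendsto_mul : Tendsto (fun t : ℝ ↦ t * b i) (𝓝[<] 1) (𝓝 (b i)) :=
      (Continuous.tendsto' (by fun_prop) 1 (b i) (one_mul _)).mono_left nhdsWithin_le_nhds
    exact tendsto_mul.eventually_const_lt hi
  obtain ⟨t, ⟨ht0, ht1⟩, ht⟩ :=
    ((eventually_mem_set.2 (Ioo_mem_nhdsLT zero_lt_one)).and
      (eventually_all.2 lt_mul_near_one)).exists
  exact ⟨t, ht0, ht1, ht⟩

lemma forall_ncard_inter_le_iff {ρ : Set α → ℝ} (hmono : Monotone ρ) (hempty : 0 ≤ ρ ∅)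
    (A : Set α) :
    (∀ B, ((A ∩ B).ncard : ℝ) ≤ ρ B) ↔ ∀ A' ⊆ A, A'.Nonempty → (A'.ncard : ℝ) ≤ ρ A' := by
  refine ⟨fun h A' hA' _ ↦ ?_, fun h B ↦ ?_⟩
  · simpa only [inter_eq_self_of_subset_right hA'] using h A'
  · refine le_trans ?_ (hmono (inter_subset_right : A ∩ B ⊆ B))
    obtain hAB | hAB := (A ∩ B).eq_empty_or_nonempty
    · simpa only [hAB, ncard_empty, Nat.cast_zero] using hempty
    · exact h _ inter_subset_left hAB

theorem laman_polymatroidal_general [Finite α] {f : Set α → ℝ} (hf : IsPolymatroidRank f) :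
    ∃ ρ : Set α → ℝ, IsPolymatroidRank ρ ∧
      ∀ A : Set α, (∀ A' ⊆ A, A'.Nonempty → (A'.ncard : ℝ) < f A') ↔
        ∀ B : Set α, ((A ∩ B).ncard : ℝ) ≤ ρ B := by
  obtain ⟨t, ht0, ht1, ht⟩ := exists_scale_forall_lt_mul (fun A : Set α ↦ (A.ncard : ℝ)) f
  have hρ : IsPolymatroidRank fun A ↦ t * f A := hf.const_mul ht0.le
  have lt_iff_le_mul {A : Set α} (hA : A.Nonempty) : (A.ncard : ℝ) < f A ↔ A.ncard ≤ t * f A := by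
    refine ⟨fun h ↦ (ht A h).le, fun h ↦ h.trans_lt ?_⟩
    have hcard : (0 : ℝ) < A.ncard := by exact_mod_cast hA.ncard_pos
    have hfA : 0 < f A := pos_of_mul_pos_right (hcard.trans_le h) ht0.le
    exact mul_lt_of_lt_one_left hfA ht1
  refine ⟨_, hρ, fun A ↦ ?_⟩
  rw [forall_ncard_inter_le_iff hρ.mono hρ.empty.ge]
  exact forall₃_congr fun _ _ hA' ↦ lt_iff_le_mul hA'

end Polymatroid

/-- **Proposition (the Laman complex is polymatroidal).**
Let `M` be a loopless matroid on a finite ground set `E` (here `E = univ` for a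
finite type) and let `m > 1` be real.  Then there is a monotone, submodular,
normalized function `ρ : 2^E → ℝ≥0` such that a set `A ⊆ E` is `m`-Laman
independent if and only if the characteristic vector of `A` is an independent
vector of the polymatroid of `ρ`, i.e. `|A ∩ B| ≤ ρ(B)` for every `B ⊆ E`. -/
theorem laman_polymatroidal {α : Type*} [Fintype α] (M : Matroid α)
    (hE : M.E = Set.univ) (hloopless : ∀ x : α, M.Indep {x})
    (m : ℝ) (hm : 1 < m) :
    ∃ ρ : Set α → ℝ,
      (∀ A, 0 ≤ ρ A) ∧
      (∀ A B, A ⊆ B → ρ A ≤ ρ B) ∧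
      (∀ A B, ρ (A ∪ B) + ρ (A ∩ B) ≤ ρ A + ρ B) ∧
      ρ ∅ = 0 ∧
      ∀ A : Set α, (M.LamanIndep m A ↔ ∀ B : Set α, ((A ∩ B).ncard : ℝ) ≤ ρ B) := by
  obtain ⟨ρ, hρ, h⟩ := laman_polymatroidal_general
    ((isPolymatroidRank_rankFun M).const_mul (zero_lt_one.trans hm).le)
  exact ⟨ρ, hρ.nonneg, fun _ _ hAB ↦ hρ.mono hAB, hρ.submod, hρ.empty, h⟩
end

section
/- Let F be a finite field with q elements and let 0 < k < d be integers with d ≥ 2. Let v_1, …, v_n be the columns of an r × n matrix V over F of rank r, and let v*_1, …, v*_n be the columns of an (n−r) × n matrix V* over F of rank n−r whose row space equals the null space of V (so V · (V*)^T = 0). Let M be the matroid represented by v_1,…,v_n ⊂ F^r and M^⊥ the (dual) matroid represented by v*_1,…,v*_n ⊂ F^{n−r}. Then q^{d·r} · |X_{d−k,d}(M^⊥)| = q^{(d−k)·n} · |X_{k,d}(M)|. -/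
/-- The space of `(k,d)`-photos of the matroid represented by
`v : Fin n → F^r`: pairs `(φ, W)` where `φ : F^r → F^d` is linear, each `W i`
is a `k`-dimensional subspace of `F^d`, and `φ (v i) ∈ W i` for all `i`. -/
def PhotoSpace (F : Type*) [Field F] (r d k n : ℕ) (v : Fin n → (Fin r → F)) :=
  {p : ((Fin r → F) →ₗ[F] (Fin d → F)) × (Fin n → Submodule F (Fin d → F)) //
    (∀ i, Module.finrank F (p.2 i) = k) ∧ ∀ i, p.1 (v i) ∈ p.2 i}

/-!
For a fixed tuple of subspaces `W`, the admissible `φ` form a linear space, so counting photos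
reduces to comparing dimensions. Identify `φ` with the family `(φ (v i))ᵢ ∈ Nⁿ`, where
`N = F ^ d`. Under the standard form on `Nⁿ`, the families coming from `v` and those coming from a
Gale dual `v'` are orthogonal complements of each other, and the complement of `∏ W i` is
`∏ (W i)ᗮ`. As `(C + U)ᗮ = Cᗮ ∩ Uᗮ`, the dimensions of the two photo spaces over `W` and
over `Wᗮ` differ by a constant independent of `W`; sum over `W`.
-/

open Module LinearMap

section Orthogonal

theorem bilinForm_orthogonal_sup {R E : Type*} [CommSemiring R] [AddCommMonoid E] [Module R E]
    (B : LinearMap.BilinForm R E) (C U : Submodule R E) :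
    B.orthogonal (C ⊔ U) = B.orthogonal C ⊓ B.orthogonal U := by
  refine le_antisymm (le_inf (BilinForm.orthogonal_le le_sup_left)
    (BilinForm.orthogonal_le le_sup_right)) ?_
  rintro x ⟨hxC, hxU⟩ y hy
  obtain ⟨c, hc, u, hu, rfl⟩ := Submodule.mem_sup.1 hy
  have hcx : B c x = 0 := hxC c hc
  have hux : B u x = 0 := hxU u hu
  change B (c + u) x = 0
  simp [hcx, hux]

variable {K E : Type*} [Field K] [AddCommGroup E] [Module K E] [FiniteDimensional K E]

theorem finrank_add_finrank_orthogonal_inf_orthogonal {B : LinearMap.BilinForm K E}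
    (hB : B.Nondegenerate) (C U : Submodule K E) :
    finrank K C + finrank K ↥(B.orthogonal C ⊓ B.orthogonal U) =
      finrank K (B.orthogonal U) + finrank K ↥(C ⊓ U) := by
  rw [← bilinForm_orthogonal_sup, BilinForm.finrank_orthogonal hB, BilinForm.finrank_orthogonal hB]
  have hsup := Submodule.finrank_sup_add_finrank_inf_eq C U
  have hsup_le := (C ⊔ U).finrank_le
  have hU_le := U.finrank_le
  omega

theorem finrank_orthogonal_eq_finrank_sub_iff {B : LinearMap.BilinForm K E} (hB : B.Nondegenerate)
    {k : ℕ} (hk : k ≤ finrank K E) (W : Submodule K E) :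
    finrank K (B.orthogonal W) = finrank K E - k ↔ finrank K W = k := by
  have hW := W.finrank_le
  rw [BilinForm.finrank_orthogonal hB]
  omega

variable (K E) in
theorem exists_bilinForm_isSymm_nondegenerate :
    ∃ B : LinearMap.BilinForm K E, B.IsSymm ∧ B.Nondegenerate :=
  ⟨Matrix.toBilin (finBasis K E) 1, Matrix.isSymm_toBilin_iff_isSymm _ |>.2 Matrix.isSymm_one,
    (Matrix.nondegenerate_iff_det_ne_zero.2 (by simp)).toBilin _⟩

end Orthogonal

section PiBilinForm

variable {ι R : Type*} [Fintype ι] [CommSemiring R]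
  {N : ι → Type*} [∀ i, AddCommMonoid (N i)] [∀ i, Module R (N i)]

/-- The orthogonal direct sum of finitely many bilinear forms, as a form on the product. -/
def piBilinForm (B : ∀ i, LinearMap.BilinForm R (N i)) : LinearMap.BilinForm R (∀ i, N i) :=
  ∑ i, (B i).comp (proj i) (proj i)

theorem piBilinForm_apply (B : ∀ i, LinearMap.BilinForm R (N i)) (x y : ∀ i, N i) :
    piBilinForm B x y = ∑ i, B i (x i) (y i) := by
  simp [piBilinForm]

theorem piBilinForm_single_left [DecidableEq ι] (B : ∀ i, LinearMap.BilinForm R (N i)) (i : ι)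
    (y : N i) (x : ∀ i, N i) :
    piBilinForm B (Pi.single i y) x = B i y (x i) := by
  rw [piBilinForm_apply, Fintype.sum_eq_single i fun j hj => by simp [Pi.single_eq_of_ne hj]]
  simp

theorem piBilinForm_single_right [DecidableEq ι] (B : ∀ i, LinearMap.BilinForm R (N i))
    (x : ∀ i, N i) (i : ι) (y : N i) :
    piBilinForm B x (Pi.single i y) = B i (x i) y := by
  rw [piBilinForm_apply, Fintype.sum_eq_single i fun j hj => by simp [Pi.single_eq_of_ne hj]]
  simp

theorem piBilinForm_nondegenerate {B : ∀ i, LinearMap.BilinForm R (N i)}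
    (hB : ∀ i, (B i).Nondegenerate) :
    (piBilinForm B).Nondegenerate := by
  classical
  refine ⟨fun x hx => funext fun i => (hB i).1 _ fun y => ?_,
    fun x hx => funext fun i => (hB i).2 _ fun y => ?_⟩
  · rw [← piBilinForm_single_right, hx]
  · rw [← piBilinForm_single_left, hx]

theorem orthogonal_piBilinForm_pi (B : ∀ i, LinearMap.BilinForm R (N i))
    (W : ∀ i, Submodule R (N i)) :
    (piBilinForm B).orthogonal (Submodule.pi Set.univ W) =
      Submodule.pi Set.univ fun i => (B i).orthogonal (W i) := by
  classical
  ext x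
  refine ⟨fun hx i _ y hy => ?_, fun hx y hy => ?_⟩
  · change B i y (x i) = 0
    rw [← piBilinForm_single_left]
    exact hx _ (Submodule.le_comap_single_pi W hy)
  · change piBilinForm B y x = 0
    rw [piBilinForm_apply]
    exact Finset.sum_eq_zero fun i _ => hx i trivial (y i) (hy i trivial)

end PiBilinForm

theorem finrank_submodule_pi {ι K : Type*} [Fintype ι] [Field K] {N : ι → Type*}
    [∀ i, AddCommGroup (N i)] [∀ i, Module K (N i)] [∀ i, FiniteDimensional K (N i)]
    (W : ∀ i, Submodule K (N i)) :
    finrank K (Submodule.pi Set.univ W) = ∑ i, finrank K (W i) := by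
  have range_eq : range (piMap fun i => (W i).subtype) = Submodule.pi Set.univ W := by
    ext x
    exact ⟨fun ⟨y, hy⟩ i _ => hy ▸ (y i).2, fun hx => ⟨fun i => ⟨x i, hx i trivial⟩, rfl⟩⟩
  rw [← range_eq, finrank_range_of_inj, finrank_pi_fintype]
  exact Function.Injective.piMap fun i => Subtype.val_injective

section EvalFamily

/-- Evaluation of linear maps `M → N` at each member of the family `v`. -/
def evalFamily {ι R M : Type*} (N : Type*) [CommSemiring R] [AddCommMonoid M] [Module R M]
    [AddCommMonoid N] [Module R N] (v : ι → M) : (M →ₗ[R] N) →ₗ[R] (ι → N) :=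
  LinearMap.pi fun i => applyₗ (v i)

theorem evalFamily_injective {ι R M : Type*} (N : Type*) [CommSemiring R] [AddCommMonoid M]
    [Module R M] [AddCommMonoid N] [Module R N] {v : ι → M}
    (hv : Submodule.span R (Set.range v) = ⊤) :
    Function.Injective (evalFamily (R := R) N v) := fun _ _ h =>
  ext_on_range hv fun i => congrFun h i

theorem finite_of_span_range_eq_top {ι R M : Type*} [Finite ι] [Semiring R] [AddCommMonoid M]
    [Module R M] {v : ι → M} (hv : Submodule.span R (Set.range v) = ⊤) : Module.Finite R M :=
  finite_def.2 (hv ▸ Submodule.fg_span (Set.finite_range v))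

theorem finrank_range_evalFamily {ι K M : Type*} (N : Type*) [Finite ι] [Field K] [AddCommGroup M]
    [Module K M] [AddCommGroup N] [Module K N] {v : ι → M}
    (hv : Submodule.span K (Set.range v) = ⊤) :
    finrank K (range (evalFamily (R := K) N v)) = finrank K M * finrank K N := by
  have := finite_of_span_range_eq_top hv
  rw [finrank_range_of_inj (evalFamily_injective N hv), finrank_linearMap]

end EvalFamily

section GaleDual

variable {ι K M M' N : Type*} [Fintype ι] [Field K] [AddCommGroup M] [Module K M]
  [AddCommGroup M'] [Module K M'] [AddCommGroup N] [Module K N] [FiniteDimensional K N]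

variable (K) in
/-- `v` and `v'` are Gale dual vector configurations, that is, they represent dual matroids:
both span, and their row spaces `{(f (v i))ᵢ | f ∈ M*}` and `{(g (v' i))ᵢ | g ∈ M'*}` are
orthogonal complements in `K ^ ι`, encoded by orthogonality together with complementary
dimensions. -/
structure IsGaleDual (v : ι → M) (v' : ι → M') : Prop where
  span_left : Submodule.span K (Set.range v) = ⊤
  span_right : Submodule.span K (Set.range v') = ⊤
  finrank_add_finrank : finrank K M + finrank K M' = Fintype.card ι
  sum_mul_eq_zero : ∀ (f : Dual K M) (g : Dual K M'), ∑ i, f (v i) * g (v' i) = 0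

namespace IsGaleDual

variable {v : ι → M} {v' : ι → M'}

theorem sum_bilin_eq_zero (h : IsGaleDual K v v') {N' : Type*} [AddCommGroup N'] [Module K N']
    (B : N →ₗ[K] N' →ₗ[K] K) (φ : M →ₗ[K] N) (ψ : M' →ₗ[K] N') :
    ∑ i, B (φ (v i)) (ψ (v' i)) = 0 := by
  let b := finBasis K N
  calc ∑ i, B (φ (v i)) (ψ (v' i))
      = ∑ i, ∑ j, b.coord j (φ (v i)) * B (b j) (ψ (v' i)) := by
        refine Finset.sum_congr rfl fun i _ => ?_
        conv_lhs => rw [← b.sum_repr (φ (v i)), map_sum, LinearMap.sum_apply]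
        simp
    _ = ∑ j, ∑ i, (b.coord j ∘ₗ φ) (v i) * (B (b j) ∘ₗ ψ) (v' i) := Finset.sum_comm
    _ = 0 := Finset.sum_eq_zero fun j _ => h.sum_mul_eq_zero _ _

theorem orthogonal_range_evalFamily (h : IsGaleDual K v v') {B : LinearMap.BilinForm K N}
    (hB : B.Nondegenerate) :
    (piBilinForm fun _ : ι => B).orthogonal (range (evalFamily N v)) =
      range (evalFamily N v') := by
  symm
  apply Submodule.eq_of_le_of_finrank_eq
  · rintro _ ⟨ψ, rfl⟩ _ ⟨φ, rfl⟩
    exact (piBilinForm_apply _ _ _).trans (h.sum_bilin_eq_zero B φ ψ)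
  · rw [BilinForm.finrank_orthogonal (piBilinForm_nondegenerate fun _ => hB),
      finrank_range_evalFamily N h.span_left, finrank_range_evalFamily N h.span_right,
      finrank_pi_fintype, Finset.sum_const, Finset.card_univ, ← h.finrank_add_finrank]
    simp [add_mul]

end IsGaleDual

theorem span_range_col_eq_top {m : Type*} [Fintype m] {V : Matrix m ι K}
    (hV : V.rank = Fintype.card m) : Submodule.span K (Set.range V.col) = ⊤ :=
  Submodule.eq_top_of_finrank_eq <| by rw [← V.rank_eq_finrank_span_cols, hV, finrank_pi]

open Matrix in
theorem isGaleDual_col {m n : Type*} [Fintype m] [Fintype n] {V : Matrix m ι K}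
    {V' : Matrix n ι K} (hV : V.rank = Fintype.card m) (hV' : V'.rank = Fintype.card n)
    (hcard : Fintype.card m + Fintype.card n = Fintype.card ι) (horth : V * V'ᵀ = 0) :
    IsGaleDual K V.col V'.col where
  span_left := span_range_col_eq_top hV
  span_right := span_range_col_eq_top hV'
  finrank_add_finrank := by simpa using hcard
  sum_mul_eq_zero f g := by
    classical
    obtain ⟨a, rfl⟩ := (dotProductEquiv K m).surjective f
    obtain ⟨c, rfl⟩ := (dotProductEquiv K n).surjective g
    calc ∑ i, a ⬝ᵥ V.col i * (c ⬝ᵥ V'.col i)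
        = (a ᵥ* V) ⬝ᵥ (V'ᵀ *ᵥ c) := by rw [mulVec_transpose]; rfl
      _ = 0 := by rw [← dotProduct_mulVec, mulVec_mulVec, horth, zero_mulVec, dotProduct_zero]

end GaleDual

section Photos

/-- The linear maps `φ` with `φ (v i) ∈ W i` for all `i`: the fibre over `W` of the projection
`(φ, W) ↦ W` from the photos of `v`. -/
def photoFibre {ι R M N : Type*} [CommSemiring R] [AddCommMonoid M] [Module R M]
    [AddCommMonoid N] [Module R N] (v : ι → M) (W : ι → Submodule R N) :
    Submodule R (M →ₗ[R] N) :=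
  (Submodule.pi Set.univ W).comap (evalFamily N v)

variable {ι K M M' N : Type*} [Field K] [AddCommGroup M] [Module K M]
  [AddCommGroup M'] [Module K M'] [AddCommGroup N] [Module K N]

theorem finrank_photoFibre {v : ι → M} (hv : Submodule.span K (Set.range v) = ⊤)
    (W : ι → Submodule K N) :
    finrank K (photoFibre v W) =
      finrank K ↥(range (evalFamily N v) ⊓ Submodule.pi Set.univ W) := by
  rw [← Submodule.map_comap_eq]
  exact (Submodule.equivMapOfInjective _ (evalFamily_injective N hv) _).finrank_eq

theorem IsGaleDual.finrank_photoFibre_orthogonal [Fintype ι] [FiniteDimensional K N]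
    {v : ι → M} {v' : ι → M'} (h : IsGaleDual K v v') {B : LinearMap.BilinForm K N}
    (hB : B.Nondegenerate) (W : ι → Submodule K N) :
    finrank K M * finrank K N + finrank K (photoFibre v' fun i => B.orthogonal (W i)) =
      ∑ i, finrank K (B.orthogonal (W i)) + finrank K (photoFibre v W) := by
  rw [finrank_photoFibre h.span_left, finrank_photoFibre h.span_right,
    ← h.orthogonal_range_evalFamily hB, ← finrank_range_evalFamily N h.span_left,
    ← finrank_submodule_pi, ← orthogonal_piBilinForm_pi]
  exact finrank_add_finrank_orthogonal_inf_orthogonal (piBilinForm_nondegenerate fun _ => hB) _ _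

variable (K N) in
/-- Tuples of subspaces of `N` of prescribed dimensions `k i`: a product of Grassmannians. -/
abbrev SubspaceFamily (k : ι → ℕ) :=
  {W : ι → Submodule K N // ∀ i, finrank K (W i) = k i}

variable (K N) in
/-- The photos `(φ, W)` of a vector configuration `v` in a space `N`, where the dimension `k i` of
`W i` may vary with `i`. -/
def PhotoFamily (v : ι → M) (k : ι → ℕ) :=
  {p : (M →ₗ[K] N) × (ι → Submodule K N) //
    (∀ i, finrank K (p.2 i) = k i) ∧ ∀ i, p.1 (v i) ∈ p.2 i}

theorem photoSpace_eq_photoFamily (F : Type*) [Field F] (r d k n : ℕ) (v : Fin n → (Fin r → F)) :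
    PhotoSpace F r d k n v = PhotoFamily F (Fin d → F) v fun _ => k := rfl

/-- The bijection `W ↦ (W i)ᗮ` between the index sets of the two photo counts. -/
def orthogonalFamilyEquiv [FiniteDimensional K N] {B : LinearMap.BilinForm K N}
    (hB : B.Nondegenerate) (hB_refl : B.IsRefl) {k : ι → ℕ} (hk : ∀ i, k i ≤ finrank K N) :
    SubspaceFamily K N k ≃ SubspaceFamily K N fun i => finrank K N - k i :=
  (Equiv.piCongrRight fun _ => Function.Involutive.toPerm B.orthogonal
    (BilinForm.orthogonal_orthogonal hB hB_refl)).subtypeEquiv fun W =>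
      forall_congr' fun i => (finrank_orthogonal_eq_finrank_sub_iff hB (hk i) (W i)).symm

/-- The photos of `v`, fibred over their tuples of subspaces. -/
def photoFamilyEquivSigma (v : ι → M) (k : ι → ℕ) :
    PhotoFamily K N v k ≃ Σ W : SubspaceFamily K N k, photoFibre v W.1 where
  toFun p := ⟨⟨p.1.2, p.2.1⟩, p.1.1, fun i _ => p.2.2 i⟩
  invFun q := ⟨(q.2.1, q.1.1), q.1.2, fun i => q.2.2 i trivial⟩
  left_inv _ := rfl
  right_inv _ := rfl

theorem natCard_photoFamily [Finite K] [FiniteDimensional K M] [FiniteDimensional K N] (v : ι → M)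
    (k : ι → ℕ) [Fintype (SubspaceFamily K N k)] :
    Nat.card (PhotoFamily K N v k) =
      ∑ W : SubspaceFamily K N k, Nat.card K ^ finrank K (photoFibre v W.1) := by
  have : Finite (M →ₗ[K] N) := finite_of_finite K
  rw [Nat.card_congr (photoFamilyEquivSigma v k), Nat.card_sigma]
  exact Finset.sum_congr rfl fun W _ => natCard_eq_pow_finrank

theorem photo_count_duality_general [Fintype ι] [Finite K] [FiniteDimensional K N] {v : ι → M}
    {v' : ι → M'} (h : IsGaleDual K v v') {k : ι → ℕ} (hk : ∀ i, k i ≤ finrank K N) :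
    Nat.card K ^ (finrank K M * finrank K N) *
        Nat.card (PhotoFamily K N v' fun i => finrank K N - k i) =
      Nat.card K ^ (∑ i, (finrank K N - k i)) * Nat.card (PhotoFamily K N v k) := by
  have : Finite N := finite_of_finite K
  have : Fintype (SubspaceFamily K N k) := Fintype.ofFinite _
  have : Fintype (SubspaceFamily K N fun i => finrank K N - k i) := Fintype.ofFinite _
  obtain ⟨B, hB_symm, hB⟩ := exists_bilinForm_isSymm_nondegenerate K N
  let e := orthogonalFamilyEquiv hB hB_symm.isRefl hk
  have fibre_dim (W : SubspaceFamily K N k) :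
      finrank K M * finrank K N + finrank K (photoFibre v' (e W).1) =
        ∑ i, (finrank K N - k i) + finrank K (photoFibre v W.1) := by
    rw [← Finset.sum_congr rfl fun i _ => (e W).2 i]
    exact h.finrank_photoFibre_orthogonal hB W.1
  have := finite_of_span_range_eq_top h.span_left
  have := finite_of_span_range_eq_top h.span_right
  rw [natCard_photoFamily, natCard_photoFamily, ← e.sum_comp, Finset.mul_sum, Finset.mul_sum]
  refine Finset.sum_congr rfl fun W _ => ?_
  rw [← pow_add, ← pow_add, fibre_dim]

end Photos

/-- **Corollary (photo-counting symmetry between a matroid and its dual).**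
Let `F` be a finite field with `q` elements, `0 < k < d`, `d ≥ 2`.  Let `V` be an
`r × n` matrix over `F` of rank `r` and `V*` an `(n-r) × n` matrix of rank `n-r`
with `V ⬝ (V*)ᵀ = 0` (so the row space of `V*` is the null space of `V`).  If `M`
is the matroid represented by the columns of `V` and `M^⊥` the dual matroid
represented by the columns of `V*`, then
`q^{d·r} · |X_{d-k,d}(M^⊥)| = q^{(d-k)·n} · |X_{k,d}(M)|`. -/
theorem photo_count_duality (F : Type*) [Field F] [Fintype F] (r d k n : ℕ)
    (hd : 2 ≤ d) (hk : 0 < k) (hkd : k < d)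
    (V : Matrix (Fin r) (Fin n) F) (Vs : Matrix (Fin (n - r)) (Fin n) F)
    (hV : V.rank = r) (hVs : Vs.rank = n - r) (horth : V * Vs.transpose = 0) :
    (Fintype.card F) ^ (d * r) *
        Nat.card (PhotoSpace F (n - r) d (d - k) n (fun i t => Vs t i)) =
      (Fintype.card F) ^ ((d - k) * n) *
        Nat.card (PhotoSpace F r d k n (fun i t => V t i)) := by
  have hrn : r + (n - r) = n := Nat.add_sub_cancel' (hV ▸ V.rank_le_width)
  have gale : IsGaleDual F (fun i t => V t i) fun i t => Vs t i :=
    isGaleDual_col (by simpa using hV) (by simpa using hVs) (by simpa using hrn) horth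
  simpa [mul_comm, photoSpace_eq_photoFamily] using
    photo_count_duality_general (N := Fin d → F) gale (k := fun _ => k) fun _ => by
      simpa using hkd.le
end

section
/- (Nesting Theorem, inclusion R^d(M) ⊆ L^d(M).) Let F be a field, d ≥ 2 an integer, and v_1, …, v_n ∈ F^r. If A ⊆ {1,…,n} is d-rigidity independent, then for every nonempty subset A' ⊆ A one has d · dim_F span{v_i : i ∈ A'} > |A'| (that is, A is d-Laman independent for the matroid represented by the v_i). -/
open scoped TensorProduct

/-- The field `K = F(Φ)` of rational functions over `F` in the `d·r` entries
`Φ_{st}` of a generic `d × r` matrix. -/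
abbrev GenericField (F : Type*) [Field F] (d r : ℕ) : Type _ :=
  FractionRing (MvPolynomial (Fin d × Fin r) F)

/-- The rigidity vector `w ⊗ Φ(w) ∈ K^r ⊗_K K^d` attached to a vector
`w ∈ F^r`, where `Φ : K^r → K^d` is the generic linear map with matrix entries
the indeterminates `Φ_{st}`, so that `Φ(w) s = Σ_t Φ_{st} · w t`. -/
noncomputable def rigidityVec (F : Type*) [Field F] (d r : ℕ) (w : Fin r → F) :
    TensorProduct (GenericField F d r)
      (Fin r → GenericField F d r) (Fin d → GenericField F d r) :=
  (fun t => algebraMap (MvPolynomial (Fin d × Fin r) F) (GenericField F d r)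
      (MvPolynomial.C (w t))) ⊗ₜ[GenericField F d r]
    (fun s => ∑ t, algebraMap (MvPolynomial (Fin d × Fin r) F) (GenericField F d r)
      (MvPolynomial.X (s, t) * MvPolynomial.C (w t)))

/-- A subset `A ⊆ {1,…,n}` is `d`-rigidity independent (with respect to the
representing vectors `v : Fin n → F^r`) if the vectors
`{v i ⊗ Φ(v i) : i ∈ A} ⊆ K^r ⊗_K K^d` are `K`-linearly independent, where
`K = F(Φ)` and `Φ` is the generic `d × r` matrix. -/
def RigidityIndep (F : Type*) [Field F] (d r n : ℕ) (v : Fin n → (Fin r → F))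
    (A : Set (Fin n)) : Prop :=
  LinearIndependent (GenericField F d r) (fun i : A => rigidityVec F d r (v i))

/-!
For a linear map `Φ : E → M` that is nonzero, with `dim M ≥ 2`, the vectors `x ⊗ Φ x` span a proper
subspace of `E ⊗ M`: composing `Φ ⊗ id` with a suitable alternating form on `M` gives a nonzero
functional that vanishes on all of them. So fewer than `dim M · dim E` of them can be independent.
If at least one vector `x ⊗ Φ x` is independent, then it is nonzero, and so is `Φ`. The Laman count
is this bound for the base change `E = K ⊗ W` of `W = span {v i : i ∈ A'}`.
-/

section ProperSubspace

variable {K E M : Type*} [Field K] [AddCommGroup E] [Module K E] [AddCommGroup M] [Module K M]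

theorem span_range_tmul_self_lt_top (hM : 1 < Module.rank K M) {Φ : E →ₗ[K] M} (hΦ : Φ ≠ 0) :
    Submodule.span K (Set.range fun x => x ⊗ₜ[K] Φ x) < ⊤ := by
  obtain ⟨x, hx : Φ x ≠ 0⟩ := DFunLike.ne_iff.mp hΦ
  obtain ⟨y, hxy⟩ := exists_linearIndependent_pair_of_one_lt_rank hM hx
  have hy : y ∉ Submodule.span K {Φ x} := fun h =>
    let ⟨c, hc⟩ := Submodule.mem_span_singleton.mp h
    (LinearIndependent.pair_iff' hx).mp hxy c hc
  obtain ⟨α, hα⟩ := Module.Projective.exists_dual_ne_zero K hx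
  obtain ⟨β, hβy, hβ⟩ := Submodule.exists_le_ker_of_notMem hy
  have hβx : β (Φ x) = 0 := hβ (Submodule.mem_span_singleton_self _)
  -- `L` is the alternating form `α ∧ β` on `M`, pulled back along `Φ ⊗ id`.
  let L : E ⊗[K] M →ₗ[K] K := TensorProduct.lift
    ((LinearMap.mul K K).compl₁₂ (α ∘ₗ Φ) β - (LinearMap.mul K K).compl₁₂ (β ∘ₗ Φ) α)
  have hL (z : E) (w : M) : L (z ⊗ₜ w) = α (Φ z) * β w - β (Φ z) * α w := by simp [L]
  have hspan : Submodule.span K (Set.range fun z => z ⊗ₜ[K] Φ z) ≤ LinearMap.ker L := by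
    rw [Submodule.span_le]
    rintro _ ⟨z, rfl⟩
    rw [SetLike.mem_coe, LinearMap.mem_ker, hL, mul_comm, sub_self]
  have hLxy : L (x ⊗ₜ y) ≠ 0 := by
    rw [hL, hβx, zero_mul, sub_zero]
    exact mul_ne_zero hα hβy
  exact hspan.trans_lt <| lt_top_iff_ne_top.mpr fun h =>
    hLxy (LinearMap.congr_fun (LinearMap.ker_eq_top.mp h) _)

theorem natCard_lt_of_linearIndependent_tmul_self [FiniteDimensional K E]
    (hM : 1 < Module.finrank K M) (Φ : E →ₗ[K] M) {ι : Type*} [Nonempty ι] {x : ι → E}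
    (hx : LinearIndependent K fun i => x i ⊗ₜ[K] Φ (x i)) :
    Nat.card ι < Module.finrank K M * Module.finrank K E := by
  have : FiniteDimensional K M := Module.finite_of_finrank_pos (one_pos.trans hM)
  have : Finite ι := hx.finite
  have : Fintype ι := Fintype.ofFinite ι
  have hΦ : Φ ≠ 0 := by
    rintro rfl
    exact hx.ne_zero (Classical.arbitrary ι) (TensorProduct.tmul_zero _ _)
  have hspan : Submodule.span K (Set.range fun i => x i ⊗ₜ[K] Φ (x i)) < ⊤ :=
    (Submodule.span_mono (Set.range_comp_subset_range x fun z => z ⊗ₜ[K] Φ z)).trans_lt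
      (span_range_tmul_self_lt_top (Module.one_lt_rank_of_one_lt_finrank hM) hΦ)
  calc Nat.card ι
      = Module.finrank K (Submodule.span K (Set.range fun i => x i ⊗ₜ[K] Φ (x i))) := by
        rw [finrank_span_eq_card hx, Nat.card_eq_fintype_card]
    _ < Module.finrank K (E ⊗[K] M) := Submodule.finrank_lt hspan.ne
    _ = Module.finrank K M * Module.finrank K E := by
        rw [Module.finrank_tensorProduct, mul_comm]

end ProperSubspace

section BaseChange

variable {F K V E M ι : Type*} [Field F] [Field K] [Algebra F K]
  [AddCommGroup V] [Module F V]
  [AddCommGroup E] [Module F E] [Module K E] [IsScalarTower F K E]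
  [AddCommGroup M] [Module F M] [Module K M] [IsScalarTower F K M]

theorem natCard_lt_of_linearIndependent_tmul [Finite ι] [Nonempty ι]
    (hM : 1 < Module.finrank K M) (f : V →ₗ[F] E) (Φ : V →ₗ[F] M) {u : ι → V}
    (hu : LinearIndependent K fun i => f (u i) ⊗ₜ[K] Φ (u i)) :
    Nat.card ι < Module.finrank K M * Module.finrank F (Submodule.span F (Set.range u)) := by
  let W := Submodule.span F (Set.range u)
  have : FiniteDimensional F W := FiniteDimensional.span_of_finite F (Set.finite_range u)
  let w (i : ι) : W := ⟨u i, Submodule.subset_span (Set.mem_range_self i)⟩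
  let fK : K ⊗[F] W →ₗ[K] E := (f ∘ₗ W.subtype).liftBaseChange K
  let ΦK : K ⊗[F] W →ₗ[K] M := (Φ ∘ₗ W.subtype).liftBaseChange K
  have hlift : LinearIndependent K fun i => ((1 : K) ⊗ₜ[F] w i) ⊗ₜ[K] ΦK (1 ⊗ₜ[F] w i) := by
    apply LinearIndependent.of_comp (fK.rTensor M)
    simpa [Function.comp_def, fK, ΦK, w] using hu
  simpa only [Module.finrank_baseChange] using
    natCard_lt_of_linearIndependent_tmul_self hM ΦK hlift

theorem rigidity_subset_laman_general (hM : 2 ≤ Module.finrank K M) (f : V →ₗ[F] E)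
    (Φ : V →ₗ[F] M) (v : ι → V) (A : Set ι)
    (hA : LinearIndependent K fun i : A => f (v i) ⊗ₜ[K] Φ (v i)) :
    ∀ A' ⊆ A, A'.Finite → A'.Nonempty →
      A'.ncard < Module.finrank K M * Module.finrank F (Submodule.span F (v '' A')) := by
  intro A' hA' hfin hne
  have := hfin.to_subtype
  have := hne.to_subtype
  have hA'_indep : LinearIndependent K fun i : A' => f (v i) ⊗ₜ[K] Φ (v i) :=
    hA.comp (Set.inclusion hA') (Set.inclusion_injective hA')
  rw [← Nat.card_coe_set_eq, Set.image_eq_range]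
  exact natCard_lt_of_linearIndependent_tmul hM f Φ hA'_indep

end BaseChange

/-- The restriction to `F^r` of the generic linear map `Φ : K^r → K^d`, as an `F`-linear map,
given by its columns `(Φ_{st})_s`. -/
noncomputable def genericMap (F : Type*) [Field F] (d r : ℕ) :
    (Fin r → F) →ₗ[F] (Fin d → GenericField F d r) :=
  Fintype.linearCombination F fun t s =>
    algebraMap (MvPolynomial (Fin d × Fin r) F) (GenericField F d r) (MvPolynomial.X (s, t))

theorem rigidityVec_eq_tmul (F : Type*) [Field F] (d r : ℕ) (w : Fin r → F) :
    rigidityVec F d r w = (Algebra.linearMap F (GenericField F d r)).compLeft (Fin r) w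
      ⊗ₜ[GenericField F d r] genericMap F d r w := by
  have hC (a : F) : algebraMap (MvPolynomial (Fin d × Fin r) F) (GenericField F d r)
      (MvPolynomial.C a) = algebraMap F (GenericField F d r) a :=
    (IsScalarTower.algebraMap_apply F (MvPolynomial (Fin d × Fin r) F) _ a).symm
  have hincl : (fun t => algebraMap (MvPolynomial (Fin d × Fin r) F) (GenericField F d r)
      (MvPolynomial.C (w t))) = (Algebra.linearMap F (GenericField F d r)).compLeft (Fin r) w :=
    funext fun t => hC (w t)
  have hΦ : (fun s => ∑ t, algebraMap (MvPolynomial (Fin d × Fin r) F) (GenericField F d r)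
      (MvPolynomial.X (s, t) * MvPolynomial.C (w t))) = genericMap F d r w := by
    ext s
    simp only [genericMap, Fintype.linearCombination_apply, Finset.sum_apply, Pi.smul_apply]
    exact Finset.sum_congr rfl fun t _ => by rw [map_mul, hC, mul_comm, Algebra.smul_def]
  rw [rigidityVec, hincl, hΦ]

/-- **Nesting Theorem, inclusion `R^d(M) ⊆ L^d(M)`.**
Let `F` be a field, `d ≥ 2` an integer, and `v 1, …, v n ∈ F^r`.  If
`A ⊆ {1,…,n}` is `d`-rigidity independent, then `A` is `d`-Laman independent
for the matroid represented by the `v i`: for every nonempty `A' ⊆ A`,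
`d · dim span{v i : i ∈ A'} > |A'|`. -/
theorem rigidity_subset_laman (F : Type*) [Field F] (d r n : ℕ) (hd : 2 ≤ d)
    (v : Fin n → (Fin r → F)) (A : Set (Fin n))
    (hA : RigidityIndep F d r n v A) :
    ∀ A' ⊆ A, A'.Nonempty →
      A'.ncard < d * Module.finrank F (Submodule.span F (v '' A')) := by
  simp only [RigidityIndep, rigidityVec_eq_tmul] at hA
  exact fun A' hA' hne => by
    simpa using rigidity_subset_laman_general (by simpa using hd) _ _ v A hA A' hA' A'.toFinite hne
end

section
/- Let F be a field, let v_1, …, v_n ∈ F^r, and suppose there is a partition {1,…,n} = I_1 ⊔ I_2 ⊔ … ⊔ I_d such that for each j = 1,…,d the family {v_i : i ∈ I_j} is F-linearly independent. Let K = F(x) be the field of rational functions over F in the n·d indeterminates x_{ij} (1 ≤ i ≤ n, 1 ≤ j ≤ d), and for each i let x^{(i)} = (x_{i1}, …, x_{id}) ∈ K^d. Then the n vectors v_i ⊗ x^{(i)} ∈ K^r ⊗_K K^d (with v_i regarded in K^r) are K-linearly independent. -/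
open scoped TensorProduct

/-- The field `K = F(x)` of rational functions over `F` in the `n·d`
indeterminates `x_{ij}`. -/
abbrev MarkField (F : Type*) [Field F] (n d : ℕ) : Type _ :=
  FractionRing (MvPolynomial (Fin n × Fin d) F)

/-- The vector `v i ⊗ x^{(i)} ∈ K^r ⊗_K K^d`, where
`x^{(i)} = (x_{i1}, …, x_{id})` is the `i`-th fully generic marking vector. -/
noncomputable def markedVec (F : Type*) [Field F] (n d r : ℕ)
    (v : Fin n → (Fin r → F)) (i : Fin n) :
    TensorProduct (MarkField F n d) (Fin r → MarkField F n d) (Fin d → MarkField F n d) :=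
  (fun t => algebraMap (MvPolynomial (Fin n × Fin d) F) (MarkField F n d)
      (MvPolynomial.C (v i t))) ⊗ₜ[MarkField F n d]
    (fun s => algebraMap (MvPolynomial (Fin n × Fin d) F) (MarkField F n d)
      (MvPolynomial.X (i, s)))

/-!
Choose for each `k` a part `I (J k)` containing `k`, and a functional `f k` on `F^r` dual to `v k`
among the vectors of that part. Pairing `v i ⊗ x^{(i)}` with `f k ⊗ (coordinate J k)` gives the
square matrix with entries `f k (v i) * x_{i, J k}`. Under the substitution `x_{ij} ↦ [J i = j]` it
becomes the identity, so its determinant is a nonzero polynomial in the `x_{ij}`, and therefore does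
not vanish at algebraically independent values.
-/

section LinearIndependence

variable {ι : Type*}

theorem exists_dual_eq_one_of_linearIndepOn {D V : Type*} [DivisionRing D] [AddCommGroup V]
    [Module D V] {v : ι → V} {s : Set ι} (hv : LinearIndepOn D v s) {k : ι} (hk : k ∈ s) :
    ∃ f : Module.Dual D V, f (v k) = 1 ∧ ∀ i ∈ s, i ≠ k → f (v i) = 0 := by
  have hvk : v k ∉ Submodule.span D (v '' (s \ {k})) := linearIndepOn_iff_notMem_span.mp hv k hk
  obtain ⟨f, hf_span, hf_k⟩ := LinearMap.exists_extend_of_notMem 0 hvk (1 : D)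
  refine ⟨f, hf_k, fun i hi hik => ?_⟩
  exact LinearMap.congr_fun hf_span ⟨v i, Submodule.subset_span ⟨i, ⟨hi, hik⟩, rfl⟩⟩

theorem linearIndependent_of_det_dual_ne_zero {R M : Type*} [CommRing R] [IsDomain R]
    [AddCommMonoid M] [Module R M] [DecidableEq ι] {w : ι → M} (g : ι → Module.Dual R M)
    (hdet : ∀ s : Finset ι, (Matrix.of fun i k : s => g k (w i)).det ≠ 0) :
    LinearIndependent R w :=
  linearIndependent_iff_finset_linearIndependent.mpr fun s =>
    .of_comp (LinearMap.pi fun k : s => g k) (Matrix.linearIndependent_rows_of_det_ne_zero (hdet s))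

theorem linearIndependent_algebraMap_tmul {R S M τ : Type*} [CommSemiring R] [CommSemiring S]
    [Algebra R S] [AddCommMonoid M] [Module S M] [Finite τ] {v : ι → τ → R} {x : ι → M}
    (h : LinearIndependent S fun i => ((1 : S) ⊗ₜ[R] v i) ⊗ₜ[S] x i) :
    LinearIndependent S fun i => (fun t => algebraMap R S (v i t)) ⊗ₜ[S] x i := by
  classical
  have := Fintype.ofFinite τ
  let e : (τ → S) →ₗ[S] S ⊗[R] (τ → R) := (TensorProduct.piScalarRight R S S τ).symm
  have he (u : τ → R) : e (fun t => algebraMap R S (u t)) = 1 ⊗ₜ u :=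
    TensorProduct.piScalarRight_symm_algebraMap R S τ u
  apply LinearIndependent.of_comp (e.rTensor M)
  simpa only [Function.comp_def, LinearMap.rTensor_tmul, he] using h

end LinearIndependence

section AlgebraicIndependence

open MvPolynomial

variable {σ m κ R A : Type*} [CommRing R] [CommRing A] [Algebra R A]

theorem algebraicIndependent_algebraMap_X [Algebra (MvPolynomial σ R) A]
    [IsScalarTower R (MvPolynomial σ R) A] [FaithfulSMul (MvPolynomial σ R) A] :
    AlgebraicIndependent R fun p : σ => algebraMap (MvPolynomial σ R) A (X p) :=
  (algebraicIndependent_X σ R).map' (f := IsScalarTower.toAlgHom R (MvPolynomial σ R) A)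
    (FaithfulSMul.algebraMap_injective _ _)

variable [Fintype m] [DecidableEq m]

theorem det_map_aeval_ne_zero_of_algebraicIndependent {B : Type*} [CommRing B] [Algebra R B]
    {x : σ → A} (hx : AlgebraicIndependent R x) (N : Matrix m m (MvPolynomial σ R)) (y : σ → B)
    (hy : (N.map (aeval y)).det ≠ 0) : (N.map (aeval x)).det ≠ 0 := by
  rw [← AlgHom.mapMatrix_apply, ← AlgHom.map_det] at hy ⊢
  contrapose! hy
  rw [hx.eq_zero_of_aeval_eq_zero _ hy, map_zero]

theorem det_smul_ne_zero_of_algebraicIndependent [Nontrivial R] {x : m → κ → A}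
    (hx : AlgebraicIndependent R (Function.uncurry x)) (J : m → κ) (a : Matrix m m R)
    (ha_diag : ∀ k, a k k = 1) (ha_block : ∀ i k, J i = J k → i ≠ k → a i k = 0) :
    (Matrix.of fun i k => a i k • x i (J k)).det ≠ 0 := by
  classical
  let N : Matrix m m (MvPolynomial (m × κ) R) := .of fun i k => C (a i k) * X (i, J k)
  let indicator (p : m × κ) : R := if J p.1 = p.2 then 1 else 0
  have hN_indicator : N.map (aeval indicator) = 1 := by
    ext i k
    rcases eq_or_ne i k with rfl | hik
    · simp [N, indicator, ha_diag]
    · simpa [N, indicator, hik] using fun hJ => ha_block i k hJ hik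
  have hN_x : N.map (aeval (Function.uncurry x)) = .of fun i k => a i k • x i (J k) := by
    ext i k
    simp [N, Algebra.smul_def]
  rw [← hN_x]
  refine det_map_aeval_ne_zero_of_algebraicIndependent hx N indicator ?_
  rw [hN_indicator, Matrix.det_one]
  exact one_ne_zero

end AlgebraicIndependence

theorem edmonds_generic_markings_linearIndependent_general {F K V ι κ : Type*} [Field F]
    [CommRing K] [IsDomain K] [Algebra F K] [AddCommGroup V] [Module F V] {x : ι → κ → K}
    {v : ι → V} {I : κ → Set ι} (hx : AlgebraicIndependent F (Function.uncurry x))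
    (hcover : ⋃ j, I j = Set.univ) (hindep : ∀ j, LinearIndepOn F v (I j)) :
    LinearIndependent K fun i => ((1 : K) ⊗ₜ[F] v i) ⊗ₜ[K] x i := by
  classical
  choose J hJ using Set.iUnion_eq_univ_iff.mp hcover
  choose f hf_one hf_zero using fun k => exists_dual_eq_one_of_linearIndepOn (hindep (J k)) (hJ k)
  let g (k : ι) : Module.Dual K ((K ⊗[F] V) ⊗[K] (κ → K)) :=
    TensorProduct.dualDistrib K (K ⊗[F] V) (κ → K) ((f k).baseChange K ⊗ₜ LinearMap.proj (J k))
  have hg (i k : ι) : g k (((1 : K) ⊗ₜ[F] v i) ⊗ₜ[K] x i) = f k (v i) • x i (J k) := by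
    simp [g]
  refine linearIndependent_of_det_dual_ne_zero g fun s => ?_
  simp only [hg]
  have hx_s : AlgebraicIndependent F (Function.uncurry fun i : s => x i) :=
    hx.comp (Prod.map Subtype.val id) (Subtype.val_injective.prodMap Function.injective_id)
  refine det_smul_ne_zero_of_algebraicIndependent hx_s (fun k => J k)
    (.of fun i k => f k (v i)) (fun k => hf_one k) fun i k hJik hik => ?_
  exact hf_zero k i (hJik ▸ hJ i) (Subtype.coe_ne_coe.mpr hik)

/-- **Key claim in the proof of the Nesting Theorem.**
Let `F` be a field and `v 1, …, v n ∈ F^r`.  Suppose `{1,…,n}` is partitioned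
into sets `I 0 ⊔ ⋯ ⊔ I (d-1)` such that each family `{v i : i ∈ I j}` is
`F`-linearly independent (an Edmonds decomposition).  Then the `n` vectors
`v i ⊗ x^{(i)} ∈ K^r ⊗_K K^d`, with fully generic markings
`x^{(i)} = (x_{i1}, …, x_{id})` over `K = F(x_{11}, …, x_{nd})`, are
`K`-linearly independent. -/
theorem edmonds_generic_markings_linearIndependent
    (F : Type*) [Field F] (d r n : ℕ) (v : Fin n → (Fin r → F))
    (I : Fin d → Set (Fin n))
    (hcover : (⋃ j, I j) = Set.univ)
    (hdisj : Pairwise fun j j' => Disjoint (I j) (I j'))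
    (hindep : ∀ j, LinearIndependent F (fun i : I j => v i)) :
    LinearIndependent (MarkField F n d) (markedVec F n d r v) := by
  have hx := algebraicIndependent_algebraMap_X (σ := Fin n × Fin d) (R := F) (A := MarkField F n d)
  have h := edmonds_generic_markings_linearIndependent_general
    (x := fun i j => algebraMap _ (MarkField F n d) (MvPolynomial.X (i, j))) hx hcover hindep
  exact linearIndependent_algebraMap_tmul (v := v) h
end

section
/- (Generalized Laman theorem: R²(M) = L²(M).) Let F be a field and v_1, …, v_n ∈ F^r. Then a subset A ⊆ {1,…,n} is 2-rigidity independent if and only if for every nonempty subset A' ⊆ A one has 2 · dim_F span{v_i : i ∈ A'} > |A'|. -/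
open scoped TensorProduct

/-!
If the vectors `w i ⊗ Φ (w i)` are independent, those with `w i` in a subspace `U` lie in the
hyperplane of `U ⊗ K²` where `u ⊗ z ↦ Φ u ∧ z` vanishes, so there are fewer than `2 dim U` of them.

Conversely, if `w` is sparse, doubling any one index `e` leaves a family with at most
`2 dim span {w i : i ∈ s}` members over every `s`. By Rado's theorem, applied to the subspaces
`w i ⊗ F²`, there are `x i` and `y` such that the `w i ⊗ x i` together with `w e ⊗ y` are
independent. Generic `x i` over a large enough field serve all `e` at once, so `w e ⊗ K²` is never
contained in the span of the `w i ⊗ x i`. Hence some functional `f` on `V ⊗ K²` vanishes on every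
`w i ⊗ x i` but on no `w e ⊗ K²`. Writing `f (u ⊗ z) = Φ u ∧ z` gives a linear map `Φ` with
`Φ (w i)` a nonzero multiple of `x i`, so the `w i ⊗ Φ (w i)` are independent; since a nonzero minor
cannot come from the zero polynomial, they remain independent for the generic `Φ`.
-/

section Transversals

open Module

variable {ι K V : Type*} [DivisionRing K] [AddCommGroup V] [Module K V]

/-- The rank form of Hall's condition for a family of subspaces: any `k` members of the family
jointly span a space of dimension at least `k`. In finite dimension it characterizes the finite
families that admit a linearly independent transversal. -/
def RadoCondition (W : ι → Submodule K V) : Prop :=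
  ∀ s : Finset ι, s.card ≤ finrank K (s.sup W : Submodule K V)

theorem exists_lt_lt_sup_eq_of_one_lt_finrank {U : Submodule K V} (hU : 1 < finrank K U) :
    ∃ P < U, ∃ Q < U, P ⊔ Q = U := by
  obtain ⟨x, hxU, hx⟩ := U.exists_mem_ne_zero_of_ne_bot fun h => by
    rw [h, finrank_bot] at hU
    omega
  obtain ⟨C, hC⟩ := (K ∙ x).exists_isCompl
  have hPU : K ∙ x ≤ U := (Submodule.span_singleton_le_iff_mem x U).2 hxU
  refine ⟨K ∙ x, hPU.lt_of_ne ?_, C ⊓ U, inf_lt_right.2 fun hUC => hx ?_, ?_⟩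
  · rintro rfl
    exact hU.ne' (finrank_span_singleton hx)
  · exact Submodule.disjoint_def.1 hC.disjoint x (Submodule.mem_span_singleton_self x) (hUC hxU)
  · rw [← sup_inf_assoc_of_le C hPU, hC.sup_eq_top, top_inf_eq]

namespace RadoCondition

variable {W : ι → Submodule K V}

theorem update [DecidableEq ι] (hW : RadoCondition W) {j : ι} {U : Submodule K V}
    (hU : ∀ s : Finset ι, j ∉ s → s.card < finrank K (U ⊔ s.sup W : Submodule K V)) :
    RadoCondition (Function.update W j U) := by
  have sup_update {s : Finset ι} (hj : j ∉ s) : s.sup (Function.update W j U) = s.sup W :=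
    Finset.sup_congr rfl fun i hi => Function.update_of_ne (ne_of_mem_of_not_mem hi hj) U W
  intro s
  by_cases hj : j ∈ s
  · rw [← Finset.insert_erase hj, Finset.sup_insert, Function.update_self,
      sup_update (s.notMem_erase j), Finset.card_insert_of_notMem (s.notMem_erase j)]
    exact hU _ (s.notMem_erase j)
  · rw [sup_update hj]
    exact hW s

theorem update_or_update [DecidableEq ι] [FiniteDimensional K V] (hW : RadoCondition W) {j : ι}
    {P Q : Submodule K V} (hPQ : P ⊔ Q = W j) :
    RadoCondition (Function.update W j P) ∨ RadoCondition (Function.update W j Q) := by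
  by_contra! h
  obtain ⟨s, hjs, hs⟩ : ∃ s : Finset ι, j ∉ s ∧
      finrank K (P ⊔ s.sup W : Submodule K V) ≤ s.card := by
    by_contra! hP
    exact h.1 (hW.update hP)
  obtain ⟨t, hjt, ht⟩ : ∃ t : Finset ι, j ∉ t ∧
      finrank K (Q ⊔ t.sup W : Submodule K V) ≤ t.card := by
    by_contra! hQ
    exact h.2 (hW.update hQ)
  have hunion : (insert j (s ∪ t)).sup W ≤ (P ⊔ s.sup W) ⊔ (Q ⊔ t.sup W) := by
    rw [Finset.sup_insert, Finset.sup_union, ← hPQ, sup_sup_sup_comm]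
  have hinter : (s ∩ t).sup W ≤ (P ⊔ s.sup W) ⊓ (Q ⊔ t.sup W) :=
    le_inf ((Finset.sup_mono Finset.inter_subset_left).trans le_sup_right)
      ((Finset.sup_mono Finset.inter_subset_right).trans le_sup_right)
  have hj : j ∉ s ∪ t := by simp [hjs, hjt]
  have := Finset.card_insert_of_notMem hj
  have := Finset.card_union_add_card_inter s t
  have := (hW _).trans (Submodule.finrank_mono hunion)
  have := (hW _).trans (Submodule.finrank_mono hinter)
  have := Submodule.finrank_sup_add_finrank_inf_eq (P ⊔ s.sup W) (Q ⊔ t.sup W)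
  omega

theorem exists_linearIndependent_of_finrank_le_one [Finite ι] [FiniteDimensional K V]
    (hW : RadoCondition W) (hdim : ∀ i, finrank K (W i) ≤ 1) :
    ∃ x : ι → V, (∀ i, x i ∈ W i) ∧ LinearIndependent K x := by
  cases nonempty_fintype ι
  choose x hx using fun i => finrank_le_one_iff.1 (hdim i)
  refine ⟨fun i => x i, fun i => (x i).2, linearIndependent_iff_card_le_finrank_span.2 ?_⟩
  refine (hW Finset.univ).trans (Submodule.finrank_mono (Finset.sup_le fun i _ u hu => ?_))
  obtain ⟨c, hc⟩ := hx i ⟨u, hu⟩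
  rw [show u = c • (x i : V) from (congrArg Subtype.val hc).symm]
  exact Submodule.smul_mem _ c (Submodule.subset_span ⟨i, rfl⟩)

/-- Rado's theorem: a family minimal subject to the Rado condition consists of lines. -/
theorem exists_linearIndependent [Finite ι] [FiniteDimensional K V] (hW : RadoCondition W) :
    ∃ x : ι → V, (∀ i, x i ∈ W i) ∧ LinearIndependent K x := by
  classical
  induction W using WellFoundedLT.induction with
  | ind W ih =>
  by_cases hdim : ∀ i, finrank K (W i) ≤ 1
  · exact hW.exists_linearIndependent_of_finrank_le_one hdim
  push Not at hdim
  obtain ⟨j, hj⟩ := hdim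
  have shrink {U : Submodule K V} (hU : U < W j) (hWU : RadoCondition (Function.update W j U)) :
      ∃ x : ι → V, (∀ i, x i ∈ W i) ∧ LinearIndependent K x := by
    obtain ⟨x, hxW, hx⟩ := ih _ (update_lt_self_iff.2 hU) hWU
    have hle : Function.update W j U ≤ W := update_le_self_iff.2 hU.le
    exact ⟨x, fun i => hle i (hxW i), hx⟩
  obtain ⟨P, hP, Q, hQ, hPQ⟩ := exists_lt_lt_sup_eq_of_one_lt_finrank hj
  exact (hW.update_or_update hPQ).elim (shrink hP) (shrink hQ)

end RadoCondition

end Transversals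

section Tensors

open Module

variable {ι K V W : Type*} [Field K] [AddCommGroup V] [Module K V] [AddCommGroup W] [Module K W]

theorem finrank_range_rTensor_subtype (U : Submodule K V) :
    finrank K (LinearMap.range (U.subtype.rTensor W)) = finrank K U * finrank K W := by
  rw [LinearMap.finrank_range_of_inj
    (Module.Flat.rTensor_preserves_injective_linearMap _ U.injective_subtype),
    finrank_tensorProduct]

theorem range_rTensor_subtype_span_le (w : ι → V) (s : Finset ι) :
    LinearMap.range ((Submodule.span K (w '' s)).subtype.rTensor W) ≤
      s.sup fun i => LinearMap.range (TensorProduct.mk K V W (w i)) := by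
  rw [LinearMap.range_eq_map, ← TensorProduct.span_tmul_eq_top, Submodule.map_span,
    Submodule.span_le]
  rintro _ ⟨_, ⟨u, z, rfl⟩, rfl⟩
  set T := s.sup fun i => LinearMap.range (TensorProduct.mk K V W (w i))
  suffices Submodule.span K (w '' s) ≤ T.comap ((TensorProduct.mk K V W).flip z) from this u.2
  rw [Submodule.span_le]
  rintro _ ⟨i, hi, rfl⟩
  exact Finset.le_sup (f := fun i => LinearMap.range (TensorProduct.mk K V W (w i))) hi ⟨z, rfl⟩

theorem exists_linearIndependent_tmul [Finite ι] [FiniteDimensional K V] [FiniteDimensional K W]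
    {w : ι → V}
    (hw : ∀ s : Finset ι, s.card ≤ finrank K (Submodule.span K (w '' s)) * finrank K W) :
    ∃ x : ι → W, LinearIndependent K fun i => w i ⊗ₜ[K] x i := by
  have hrado : RadoCondition fun i => LinearMap.range (TensorProduct.mk K V W (w i)) := fun s =>
    calc
      s.card ≤ finrank K (LinearMap.range ((Submodule.span K (w '' s)).subtype.rTensor W)) := by
        rw [finrank_range_rTensor_subtype]
        exact hw s
      _ ≤ _ := Submodule.finrank_mono (range_rTensor_subtype_span_le w s)
  obtain ⟨z, hzw, hz⟩ := hrado.exists_linearIndependent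
  choose x hx using hzw
  exact ⟨x, by simpa only [← TensorProduct.mk_apply, hx] using hz⟩

theorem exists_dual_forall_ne_zero_of_forall_notMem [Infinite K] [Finite ι] (U : Submodule K V)
    {z : ι → V} (hz : ∀ i, z i ∉ U) : ∃ f : Dual K V, U ≤ f.ker ∧ ∀ i, f (z i) ≠ 0 := by
  obtain ⟨f, hfU, hfz⟩ := Dual.exists_forall_mem_ne_zero_of_forall_exists U.dualAnnihilator
    (fun i => Dual.eval K V (z i)) fun i => by
      obtain ⟨f, hf, hfU⟩ := Submodule.exists_le_ker_of_notMem (hz i)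
      exact ⟨f, (Submodule.mem_dualAnnihilator f).2 fun u hu => hfU hu, hf⟩
  exact ⟨f, fun u hu => (Submodule.mem_dualAnnihilator f).1 hfU u hu, hfz⟩

end Tensors

section Specialization

variable {ι κ m R K L : Type*} [CommRing R] [Field K] [Field L]

theorem exists_det_submatrix_ne_zero_of_linearIndependent_row [Fintype ι] [DecidableEq ι]
    [Finite κ] {A : Matrix ι κ L} (hA : LinearIndependent L A.row) :
    ∃ g : ι → κ, (A.submatrix id g).det ≠ 0 := by
  cases nonempty_fintype κ
  obtain ⟨κ', g, hg, hspan, hind⟩ := exists_linearIndependent' L A.col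
  have := Fintype.ofInjective g hg
  have hcard : Fintype.card ι = Fintype.card κ' := by
    rw [← hA.rank_matrix, Matrix.rank_eq_finrank_span_cols, ← hspan, finrank_span_eq_card hind]
  let e := Fintype.equivOfCardEq hcard
  refine ⟨g ∘ e, ((Matrix.isUnit_iff_isUnit_det _).1 ?_).ne_zero⟩
  exact Matrix.linearIndependent_cols_iff_isUnit.1 (hind.comp e e.injective)

theorem linearIndependent_of_specialization [Finite ι] [Finite κ] (φ : R →+* L) {ψ : R →+* K}
    (hψ : Function.Injective ψ) {M : ι → κ → R} (hM : LinearIndependent L fun i => φ ∘ M i) :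
    LinearIndependent K fun i => ψ ∘ M i := by
  classical
  cases nonempty_fintype ι
  obtain ⟨g, hg⟩ :=
    exists_det_submatrix_ne_zero_of_linearIndependent_row (A := (Matrix.of M).map φ) hM
  have hdet : ((Matrix.of M).submatrix id g).det ≠ 0 := by
    rw [Matrix.submatrix_map, ← RingHom.mapMatrix_apply, ← φ.map_det] at hg
    exact ne_zero_of_map hg
  have hunit : IsUnit (((Matrix.of M).submatrix id g).map ψ) := by
    rw [Matrix.isUnit_iff_isUnit_det, isUnit_iff_ne_zero, ← RingHom.mapMatrix_apply, ← ψ.map_det]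
    exact (map_ne_zero_iff ψ hψ).2 hdet
  exact .of_comp (LinearMap.funLeft K K g) (Matrix.linearIndependent_rows_iff_isUnit.2 hunit)

theorem linearIndependent_tmul_iff [Finite κ] [Finite m] {a : ι → κ → K} {b : ι → m → K} :
    LinearIndependent K (fun i => a i ⊗ₜ[K] b i) ↔
      LinearIndependent K fun i (p : κ × m) => a i p.1 * b i p.2 := by
  classical
  cases nonempty_fintype κ
  cases nonempty_fintype m
  let e := ((Pi.basisFun K κ).tensorProduct (Pi.basisFun K m)).equivFun
  rw [← e.toLinearMap.linearIndependent_iff e.ker]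
  congr! 1
  ext i ⟨j, k⟩
  simp [e, Module.Basis.tensorProduct_repr_tmul_apply, mul_comm]

theorem linearIndependent_tmul_of_specialization {F : Type*} [Field F] [Algebra F R] [Algebra F K]
    [Algebra F L] [Finite ι] [Finite κ] [Finite m] (φ : R →ₐ[F] L) {ψ : R →ₐ[F] K}
    (hψ : Function.Injective ψ) {a : ι → κ → F} {b : ι → m → R}
    (h : LinearIndependent L fun i => (algebraMap F L ∘ a i) ⊗ₜ[L] (φ ∘ b i)) :
    LinearIndependent K fun i => (algebraMap F K ∘ a i) ⊗ₜ[K] (ψ ∘ b i) := by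
  rw [linearIndependent_tmul_iff] at h ⊢
  simp only [Function.comp_apply, ← AlgHom.commutes φ, ← AlgHom.commutes ψ, ← map_mul] at h ⊢
  exact linearIndependent_of_specialization (φ : R →+* L) (ψ := (ψ : R →+* K)) hψ h

end Specialization

section PlaneForm

variable (K : Type*) [Field K]

/-- The standard area form on `K²`. It identifies `K²` with its dual and vanishes exactly on
parallel pairs of vectors. -/
def planeForm : LinearMap.BilinForm K (Fin 2 → K) :=
  Matrix.toBilin' !![0, 1; -1, 0]

variable {K}

theorem planeForm_apply (x y : Fin 2 → K) : planeForm K x y = x 0 * y 1 - x 1 * y 0 := by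
  simp [planeForm, Matrix.toBilin'_apply]
  ring

theorem planeForm_self (x : Fin 2 → K) : planeForm K x x = 0 := by
  rw [planeForm_apply]
  ring

theorem planeForm_nondegenerate : (planeForm K).Nondegenerate :=
  LinearMap.BilinForm.nondegenerate_toBilin'_of_det_ne_zero' _ (by simp)

theorem exists_units_smul_eq_of_planeForm_eq_zero {x y : Fin 2 → K} (hx : x ≠ 0) (hy : y ≠ 0)
    (h : planeForm K x y = 0) : ∃ c : Kˣ, c • y = x := by
  have hdep : ¬ LinearIndependent K ![y, x] := by
    change ¬ LinearIndependent K (Matrix.of ![y, x]).row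
    rw [Matrix.linearIndependent_rows_iff_isUnit, Matrix.isUnit_iff_isUnit_det, isUnit_iff_ne_zero,
      not_not, Matrix.det_fin_two, ← neg_eq_zero, ← h, planeForm_apply]
    simp [mul_comm]
  rw [LinearIndependent.pair_iff' hy] at hdep
  push Not at hdep
  obtain ⟨c, rfl⟩ := hdep
  exact ⟨Units.mk0 c (left_ne_zero_of_smul hx), rfl⟩

end PlaneForm

section Laman

open Module

variable {ι K V : Type*} [Field K] [AddCommGroup V] [Module K V]

/-- Independence of the whole index set in the Laman matroid `L²` of the vectors `w i`. Repeated
vectors count separately, since the condition ranges over sets of indices. -/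
def IsLamanSparse (K : Type*) [Field K] [Module K V] (w : ι → V) : Prop :=
  ∀ s : Finset ι, s.Nonempty → s.card < 2 * finrank K (Submodule.span K (w '' s))

theorem isLamanSparse_restrict_iff [Finite ι] {v : ι → V} {A : Set ι} :
    IsLamanSparse K (fun i : A => v i) ↔
      ∀ A' ⊆ A, A'.Nonempty → A'.ncard < 2 * finrank K (Submodule.span K (v '' A')) := by
  have image_eq (s : Finset A) : v '' (Subtype.val '' (s : Set A)) = (fun i : A => v i) '' s :=
    Set.image_image v Subtype.val _
  have ncard_eq (s : Finset A) : (Subtype.val '' (s : Set A)).ncard = s.card := by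
    rw [Set.ncard_image_of_injective _ Subtype.val_injective, Set.ncard_coe_finset]
  constructor
  · intro h A' hA' hne
    obtain ⟨s, rfl⟩ : ∃ s : Finset A, Subtype.val '' (s : Set A) = A' := by
      refine ⟨(Set.toFinite (Subtype.val ⁻¹' A')).toFinset, ?_⟩
      rw [Set.Finite.coe_toFinset, Subtype.image_preimage_coe, Set.inter_eq_right.2 hA']
    rw [image_eq, ncard_eq]
    exact h s (Set.image_nonempty.1 hne)
  · intro h s hs
    rw [← image_eq, ← ncard_eq]
    exact h _ (Subtype.coe_image_subset A s) (hs.to_set.image _)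

theorem finrank_span_le_finrank_span_of_tower {F : Type*} [Field F] [Algebra F K] [Module F V]
    [IsScalarTower F K V] (s : Set V) [FiniteDimensional F (Submodule.span F s)] :
    finrank K (Submodule.span K s) ≤ finrank F (Submodule.span F s) := by
  obtain ⟨t, -, htcard, htspan, -⟩ := Submodule.exists_finset_span_eq_linearIndepOn F s
  rw [← htcard, ← Submodule.span_span_of_tower F K s, ← htspan, Submodule.span_span_of_tower]
  exact finrank_span_finset_le_card t

theorem IsLamanSparse.of_map {F U : Type*} [Field F] [Algebra F K] [AddCommGroup U] [Module F U]
    [Module F V] [IsScalarTower F K V] {f : U →ₗ[F] V} {w : ι → U}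
    (h : IsLamanSparse K (f ∘ w)) : IsLamanSparse F w := by
  intro s hs
  have := FiniteDimensional.span_of_finite F (s.finite_toSet.image w)
  have hspan : Submodule.span F ((f ∘ w) '' s) = (Submodule.span F (w '' s)).map f := by
    rw [Submodule.map_span, Set.image_comp]
  have : FiniteDimensional F (Submodule.span F ((f ∘ w) '' s)) := hspan ▸ inferInstance
  calc
    s.card < 2 * finrank K (Submodule.span K ((f ∘ w) '' s)) := h s hs
    _ ≤ 2 * finrank F (Submodule.span F ((f ∘ w) '' s)) := by
      gcongr
      exact finrank_span_le_finrank_span_of_tower _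
    _ ≤ 2 * finrank F (Submodule.span F (w '' s)) := by
      rw [hspan]
      gcongr
      exact Submodule.finrank_map_le f _

theorem card_lt_two_mul_finrank_of_linearIndependent_tmul [Fintype ι] [Nonempty ι]
    [FiniteDimensional K V] {w : ι → V} {Φ : V →ₗ[K] Fin 2 → K}
    (h : LinearIndependent K fun i => w i ⊗ₜ[K] Φ (w i)) : Fintype.card ι < 2 * finrank K V := by
  let f : Dual K (V ⊗[K] (Fin 2 → K)) := TensorProduct.lift (planeForm K ∘ₗ Φ)
  have hspan : Submodule.span K (Set.range fun i => w i ⊗ₜ[K] Φ (w i)) ≤ f.ker := by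
    rw [Submodule.span_le]
    rintro _ ⟨i, rfl⟩
    exact planeForm_self (Φ (w i))
  have hf : f ≠ 0 := by
    intro hf
    obtain ⟨i⟩ := ‹Nonempty ι›
    have hΦ : Φ (w i) = 0 :=
      planeForm_nondegenerate.1 _ fun z => LinearMap.congr_fun hf (w i ⊗ₜ z)
    exact h.ne_zero i (by simp only [hΦ, TensorProduct.tmul_zero])
  calc
    Fintype.card ι = finrank K (Submodule.span K (Set.range fun i => w i ⊗ₜ[K] Φ (w i))) :=
      (finrank_span_eq_card h).symm
    _ ≤ finrank K f.ker := Submodule.finrank_mono hspan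
    _ < finrank K (V ⊗[K] (Fin 2 → K)) :=
      Submodule.finrank_lt fun hker => hf (LinearMap.ker_eq_top.1 hker)
    _ = 2 * finrank K V := by rw [finrank_tensorProduct, finrank_fin_fun, mul_comm]

theorem isLamanSparse_of_linearIndependent_tmul {w : ι → V} {Φ : V →ₗ[K] Fin 2 → K}
    (h : LinearIndependent K fun i => w i ⊗ₜ[K] Φ (w i)) : IsLamanSparse K w := by
  intro s hs
  have := hs.coe_sort
  let U := Submodule.span K (w '' s)
  have := FiniteDimensional.span_of_finite K (s.finite_toSet.image w)
  let w' : s → U := fun i => ⟨w i, Submodule.subset_span ⟨i, i.2, rfl⟩⟩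
  have hw' : LinearIndependent K fun i => w' i ⊗ₜ[K] (Φ ∘ₗ U.subtype) (w' i) :=
    .of_comp (U.subtype.rTensor _) (h.comp _ Subtype.val_injective)
  simpa only [Fintype.card_coe] using card_lt_two_mul_finrank_of_linearIndependent_tmul hw'

theorem exists_linearMap_linearIndependent_tmul [Infinite K] [Finite ι] {w : ι → V}
    {x y : ι → Fin 2 → K} (hx : LinearIndependent K fun i => w i ⊗ₜ[K] x i)
    (hy : ∀ i, w i ⊗ₜ[K] y i ∉ Submodule.span K (Set.range fun i => w i ⊗ₜ[K] x i)) :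
    ∃ Φ : V →ₗ[K] Fin 2 → K, LinearIndependent K fun i => w i ⊗ₜ[K] Φ (w i) := by
  obtain ⟨f, hfx, hfy⟩ := exists_dual_forall_ne_zero_of_forall_notMem _ hy
  let Φ : V →ₗ[K] Fin 2 → K :=
    ((planeForm K).toDual planeForm_nondegenerate).symm ∘ₗ TensorProduct.curry f
  have hΦ (v : V) (z : Fin 2 → K) : planeForm K (Φ v) z = f (v ⊗ₜ z) :=
    LinearMap.BilinForm.apply_toDual_symm_apply (hB := planeForm_nondegenerate) _ _
  have parallel (i : ι) : ∃ c : Kˣ, c • x i = Φ (w i) := by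
    refine exists_units_smul_eq_of_planeForm_eq_zero ?_ ?_ ?_
    · intro h
      exact hfy i (by rw [← hΦ, h, LinearMap.map_zero₂])
    · intro h
      exact hx.ne_zero i (by simp only [h, TensorProduct.tmul_zero])
    · rw [hΦ]
      exact hfx (Submodule.subset_span ⟨i, rfl⟩)
  choose c hc using parallel
  refine ⟨Φ, ?_⟩
  simp only [← hc, TensorProduct.tmul_smul]
  exact hx.units_smul c

theorem IsLamanSparse.card_le_doubled {w : ι → V} (hw : IsLamanSparse K w) (e : ι)
    (s : Finset (Option ι)) :
    s.card ≤ 2 * finrank K (Submodule.span K ((fun o : Option ι => w (o.getD e)) '' s)) := by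
  classical
  rcases s.eq_empty_or_nonempty with rfl | hs
  · simp
  have hcard : s.card ≤ (s.image fun o => o.getD e).card + 1 := by
    have hsub : s ⊆ insert none ((s.image fun o => o.getD e).image some) := by
      rintro (_ | i) hi
      · exact Finset.mem_insert_self _ _
      · exact Finset.mem_insert_of_mem (Finset.mem_image_of_mem _ (Finset.mem_image_of_mem _ hi))
    exact (Finset.card_le_card hsub).trans ((Finset.card_insert_le _ _).trans
      (Nat.add_le_add_right Finset.card_image_le 1))
  have := hw _ (hs.image fun o => o.getD e)
  rw [Finset.coe_image, Set.image_image] at this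
  omega

theorem IsLamanSparse.exists_linearIndependent_doubled [Finite ι] [FiniteDimensional K V]
    {w : ι → V} (hw : IsLamanSparse K w) (e : ι) :
    ∃ x : Option ι → Fin 2 → K, LinearIndependent K fun o => w (o.getD e) ⊗ₜ[K] x o :=
  exists_linearIndependent_tmul fun s => by
    rw [finrank_fin_fun, mul_comm]
    exact hw.card_le_doubled e s

end Laman

section Generic

open MvPolynomial

variable {ι m F K : Type*} [Finite ι] [Field F] [Field K] [Algebra F K]

theorem IsLamanSparse.exists_linearIndependent_of_algebraicIndependent [Finite m] {w : ι → m → F}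
    (hw : IsLamanSparse F w) (e : ι) {x : ι → Fin 2 → K}
    (hx : AlgebraicIndependent F fun p : ι × Fin 2 => x p.1 p.2) :
    ∃ y : Fin 2 → K, LinearIndependent K fun o : Option ι =>
      (algebraMap F K ∘ w (o.getD e)) ⊗ₜ[K] o.elim y x := by
  obtain ⟨z, hz⟩ := hw.exists_linearIndependent_doubled e
  let φ : MvPolynomial (ι × Fin 2) F →ₐ[F] F := aeval fun p => z (some p.1) p.2
  let ψ : MvPolynomial (ι × Fin 2) F →ₐ[F] K := aeval fun p => x p.1 p.2
  let b : Option ι → Fin 2 → MvPolynomial (ι × Fin 2) F :=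
    fun o => o.elim (C ∘ z none) fun i s => X (i, s)
  have hφb (o : Option ι) : φ ∘ b o = z o := by
    ext s
    cases o <;> simp [φ, b]
  have hψb (o : Option ι) : ψ ∘ b o = o.elim (algebraMap F K ∘ z none) x := by
    ext s
    cases o <;> simp [ψ, b]
  refine ⟨algebraMap F K ∘ z none, ?_⟩
  simp only [← hφb] at hz
  simp only [← hψb]
  exact linearIndependent_tmul_of_specialization φ hx hz

theorem IsLamanSparse.exists_linearMap_linearIndependent_tmul_of_algebraicIndependent [Finite m]
    {w : ι → m → F} (hw : IsLamanSparse F w) {x : ι → Fin 2 → K}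
    (hx : AlgebraicIndependent F fun p : ι × Fin 2 => x p.1 p.2) :
    ∃ Φ : (m → K) →ₗ[K] Fin 2 → K, LinearIndependent K fun i =>
      (algebraMap F K ∘ w i) ⊗ₜ[K] Φ (algebraMap F K ∘ w i) := by
  choose y hy using fun e => hw.exists_linearIndependent_of_algebraicIndependent e hx
  rcases isEmpty_or_nonempty ι with _ | _
  · exact ⟨0, linearIndependent_empty_type⟩
  · have : Infinite K := .of_injective _ hx
    have hxw := (linearIndependent_option.1 (hy (Classical.arbitrary ι))).1
    exact exists_linearMap_linearIndependent_tmul hxw fun i => (linearIndependent_option.1 (hy i)).2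

theorem algebraicIndependent_fractionRing_X (σ : Type*) :
    AlgebraicIndependent F fun s : σ =>
      algebraMap (MvPolynomial σ F) (FractionRing (MvPolynomial σ F)) (X s) :=
  (algebraicIndependent_X σ F).map' (f := IsScalarTower.toAlgHom F _ _)
    (IsFractionRing.injective _ _)

theorem aeval_comp_mvPolynomialX_mulVec {κ : Type*} [Fintype m] (M : Matrix κ m K) (u : m → F) :
    aeval (fun p : κ × m => M p.1 p.2) ∘ (Matrix.mvPolynomialX κ m F).mulVec (C ∘ u) =
      M.mulVec (algebraMap F K ∘ u) := by
  ext s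
  simp [Matrix.mulVec, dotProduct]

theorem rigidity_two_eq_laman_two_general [Fintype m] {M : Matrix (Fin 2) m K}
    (hM : AlgebraicIndependent F fun p : Fin 2 × m => M p.1 p.2) {w : ι → m → F} :
    LinearIndependent K (fun i =>
      (algebraMap F K ∘ w i) ⊗ₜ[K] M.mulVec (algebraMap F K ∘ w i)) ↔ IsLamanSparse F w := by
  classical
  refine ⟨fun h => ?_, fun hw => ?_⟩
  · exact .of_map (f := (Algebra.linearMap F K).compLeft m)
      (isLamanSparse_of_linearIndependent_tmul (Φ := M.mulVecLin) h)
  · obtain ⟨Φ, hΦ⟩ := hw.exists_linearMap_linearIndependent_tmul_of_algebraicIndependent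
      (x := fun i s => algebraMap _ (FractionRing (MvPolynomial (ι × Fin 2) F)) (X (i, s)))
      (algebraicIndependent_fractionRing_X _)
    simp only [← LinearMap.toMatrix'_mulVec, ← aeval_comp_mvPolynomialX_mulVec] at hΦ
    simp only [← aeval_comp_mvPolynomialX_mulVec]
    exact linearIndependent_tmul_of_specialization _ hM hΦ

/-- The generic map `Φ` as a matrix over the field of rational functions in its own entries, so
that `rigidityVec F d r u` is `u ⊗ Φ u`. -/
noncomputable def genericMatrix (F : Type*) [Field F] (d r : ℕ) :
    Matrix (Fin d) (Fin r) (GenericField F d r) :=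
  (Matrix.mvPolynomialX (Fin d) (Fin r) F).map (algebraMap _ _)

theorem algebraicIndependent_genericMatrix (F : Type*) [Field F] (d r : ℕ) :
    AlgebraicIndependent F fun p : Fin d × Fin r => genericMatrix F d r p.1 p.2 :=
  algebraicIndependent_fractionRing_X _

theorem rigidityVec_eq {d r : ℕ} (u : Fin r → F) :
    rigidityVec F d r u = (algebraMap F (GenericField F d r) ∘ u) ⊗ₜ[GenericField F d r]
      (genericMatrix F d r).mulVec (algebraMap F (GenericField F d r) ∘ u) := by
  have algebraMap_C (a : F) :
      algebraMap (MvPolynomial (Fin d × Fin r) F) (GenericField F d r) (C a) =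
        algebraMap F (GenericField F d r) a :=
    (IsScalarTower.algebraMap_apply F _ _ a).symm
  simp only [rigidityVec, map_mul, algebraMap_C]
  rfl

end Generic

/-- **Generalized Laman theorem: `R²(M) = L²(M)`.**
Let `F` be a field and `v 1, …, v n ∈ F^r`.  A subset `A ⊆ {1,…,n}` is
`2`-rigidity independent if and only if for every nonempty `A' ⊆ A` one has
`2 · dim span{v i : i ∈ A'} > |A'|`. -/
theorem rigidity_two_eq_laman_two (F : Type*) [Field F] (r n : ℕ)
    (v : Fin n → (Fin r → F)) (A : Set (Fin n)) :
    RigidityIndep F 2 r n v A ↔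
      ∀ A' ⊆ A, A'.Nonempty →
        A'.ncard < 2 * Module.finrank F (Submodule.span F (v '' A')) := by
  rw [← isLamanSparse_restrict_iff, RigidityIndep]
  simp only [rigidityVec_eq]
  exact rigidity_two_eq_laman_two_general (algebraicIndependent_genericMatrix F 2 r)
end

section
/- Let F be a field and let v_1, …, v_n ∈ F^r span F^r. Then for every integer d ≥ r and every subset A ⊆ {1,…,n}: A is d-rigidity independent if and only if A is r-rigidity independent. (The tower of rigidity matroids R^1(M) ⊆ R^2(M) ⊆ R^3(M) ⊆ … stabilizes at d = r.) -/
open scoped TensorProduct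

/-!
Let `Φ` be the generic `d × r` matrix. The linear map `S ↦ S * Φᵀ` sends the square `w wᵀ` to the
matrix of `w ⊗ Φ(w)`, so `d`-independence always forces the squares `v i (v i)ᵀ` to be independent
over `F`. Conversely, once `d` is at least the rank of the configuration, `Φ` specializes to a
matrix `L` over `F` that is injective on the span of the `v i`. Then `S ↦ S * Lᵀ` is injective on
the span of the squares, and linear independence of a specialization implies linear independence of
the generic family. Hence independence is the same for all such `d`.
-/

open Module Matrix

section LinearAlgebra

theorem linearIndependent_of_semilinear_comp {R k M N ι : Type*} [CommRing R] [IsDomain R]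
    [Field k] [AddCommGroup M] [Module R M] [Module.Free R M] [AddCommGroup N] [Module k N]
    {f : R →+* k} (hf : Function.Surjective f) (g : M →ₛₗ[f] N) {a : ι → M}
    (hga : LinearIndependent k (g ∘ a)) : LinearIndependent R a := by
  classical
  rw [linearIndependent_iff_finset_linearIndependent]
  intro s
  have hs : LinearIndependent k (fun i : s => g (a i)) := hga.comp _ Subtype.val_injective
  obtain ⟨φ, hφ⟩ := LinearMap.exists_leftInverse_of_injective
    (Finsupp.linearCombination k fun i : s => g (a i)) (LinearMap.ker_eq_bot.mpr hs)
  have hφ_apply (i : s) : φ (g (a i)) = Finsupp.single i 1 := by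
    simpa using LinearMap.congr_fun hφ (Finsupp.single i 1)
  -- As `M` is free and `f` is surjective, the functionals dual to the `g (a i)` lift to `M`; their
  -- matrix of values on the `a i` is the identity modulo `ker f`, so its determinant is nonzero.
  let b := Free.chooseBasis R M
  let ψ : M →ₗ[R] (s → R) := b.constr R fun j i => Function.surjInv hf (φ (g (b j)) i)
  have hψ (x : M) (i : s) : f (ψ x i) = φ (g x) i := by
    have hext : f.toSemilinearMap.comp (LinearMap.proj i ∘ₗ ψ) =
        ((Finsupp.lapply i ∘ₗ φ).comp g : M →ₛₗ[f] k) :=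
      b.ext fun j => by simp [ψ, Function.surjInv_eq]
    exact LinearMap.congr_fun hext x
  let D : Matrix s s R := Matrix.of fun i => ψ (a i)
  have hD : f.mapMatrix D = 1 := by
    ext i j
    simp [D, hψ, hφ_apply, Finsupp.single_apply, one_apply]
  have hdet : f D.det = 1 := by rw [RingHom.map_det, hD, det_one]
  exact (linearIndependent_rows_of_det_ne_zero
    (ne_zero_of_map (hdet.trans_ne one_ne_zero))).of_comp ψ

theorem exists_linearMap_leftInvOn_of_finrank_le {K V V' : Type*} [Field K] [AddCommGroup V]
    [Module K V] [AddCommGroup V'] [Module K V'] [FiniteDimensional K V'] (W : Submodule K V)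
    [FiniteDimensional K W] (hW : finrank K W ≤ finrank K V') :
    ∃ (L : V →ₗ[K] V') (L' : V' →ₗ[K] V), Set.LeftInvOn L' L W := by
  obtain ⟨e, he⟩ := finrank_le_iff_exists_linearMap.mp hW
  obtain ⟨e', he'⟩ := e.exists_leftInverse_of_injective (LinearMap.ker_eq_bot.mpr he)
  obtain ⟨L, hL⟩ := e.exists_extend
  refine ⟨L, W.subtype ∘ₗ e', fun x hx => ?_⟩
  have hLx : L x = e ⟨x, hx⟩ := LinearMap.congr_fun hL ⟨x, hx⟩
  simpa [hLx] using congrArg Subtype.val (LinearMap.congr_fun he' ⟨x, hx⟩)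

theorem lift_vecMulVecBilin_injective (R m n : Type*) [CommSemiring R] [Finite m] [Finite n] :
    Function.Injective
      (TensorProduct.lift (vecMulVecBilin R R : (m → R) →ₗ[R] (n → R) →ₗ[R] Matrix m n R)) := by
  classical
  cases nonempty_fintype m
  let b := (Pi.basisFun R m).tensorProduct (Pi.basisFun R n)
  have hequiv : TensorProduct.lift (vecMulVecBilin R R) =
      (b.equiv (stdBasis R m n) (Equiv.refl _)).toLinearMap :=
    b.ext fun ⟨i, j⟩ => by
      rw [LinearEquiv.coe_coe, b.equiv_apply, Equiv.refl_apply, stdBasis_eq_single,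
        single_eq_single_vecMulVec_single]
      simp [b, Basis.tensorProduct_apply']
  rw [hequiv]
  exact LinearEquiv.injective _

end LinearAlgebra

section GenericMatrix

variable {R F m n l : Type*} [CommSemiring R] [Field F] [Fintype n]

variable (R m n l) in
/-- The map `S ↦ S * Φᵀ` with `Φ` the generic `m × n` matrix, which is `id ⊗ Φ` in coordinates. It
takes values in matrices of polynomials, rather than rational functions, so that `Φ` can be
specialized to any matrix over `R`. -/
noncomputable def mulGenericTranspose :
    Matrix l n R →ₗ[R] Matrix l m (MvPolynomial (m × n) R) :=
  mulRightLinearMap l R (mvPolynomialX m n R)ᵀ ∘ₗ (Algebra.linearMap R _).mapMatrix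

theorem mulGenericTranspose_map_eval (L : Matrix m n R) (S : Matrix l n R) :
    (mulGenericTranspose R m n l S).map (MvPolynomial.eval fun p => L p.1 p.2) = S * Lᵀ := by
  ext i j
  simp [mulGenericTranspose, mul_apply]

theorem linearIndependent_mulGenericTranspose_of_mul_transpose [Finite m] [Finite l] {ι : Type*}
    (L : Matrix m n F) {S : ι → Matrix l n F} (hS : LinearIndependent F fun i => S i * Lᵀ) :
    LinearIndependent (MvPolynomial (m × n) F) fun i => mulGenericTranspose F m n l (S i) := by
  let ev : MvPolynomial (m × n) F →+* F := MvPolynomial.eval fun p => L p.1 p.2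
  refine linearIndependent_of_semilinear_comp (f := ev)
    (fun c => ⟨MvPolynomial.C c, by simp [ev]⟩) ev.toSemilinearMap.mapMatrix ?_
  simpa only [← mulGenericTranspose_map_eval] using! hS

end GenericMatrix

section RigidityVec

variable {F : Type*} [Field F] {d r : ℕ} {ι : Type*} {v : ι → Fin r → F}

theorem lift_vecMulVecBilin_rigidityVec (w : Fin r → F) :
    TensorProduct.lift (vecMulVecBilin _ _) (rigidityVec F d r w) =
      (mulGenericTranspose F (Fin d) (Fin r) (Fin r) (vecMulVec w w)).map
        (algebraMap _ (GenericField F d r)) := by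
  ext s t
  simp [rigidityVec, mulGenericTranspose, mul_apply, vecMulVec_apply, Finset.mul_sum,
    mul_comm, mul_left_comm]

theorem linearIndependent_rigidityVec_iff_mulGenericTranspose :
    LinearIndependent (GenericField F d r) (fun i => rigidityVec F d r (v i)) ↔
      LinearIndependent (MvPolynomial (Fin d × Fin r) F)
        fun i => mulGenericTranspose F (Fin d) (Fin r) (Fin r) (vecMulVec (v i) (v i)) := by
  let toField := (Algebra.linearMap (MvPolynomial (Fin d × Fin r) F)
    (GenericField F d r)).mapMatrix (m := Fin r) (n := Fin d)
  have hker : LinearMap.ker toField = ⊥ :=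
    LinearMap.ker_eq_bot.mpr (map_injective (IsFractionRing.injective _ _))
  rw [← LinearMap.linearIndependent_iff _
      (LinearMap.ker_eq_bot.mpr (lift_vecMulVecBilin_injective _ _ _)),
    ← LinearMap.linearIndependent_iff toField hker,
    LinearIndependent.iff_fractionRing (MvPolynomial (Fin d × Fin r) F) (GenericField F d r)]
  simp only [Function.comp_def, lift_vecMulVecBilin_rigidityVec]
  rfl

theorem linearIndependent_rigidityVec_iff_vecMulVec
    (hd : finrank F (Submodule.span F (Set.range v)) ≤ d) :
    LinearIndependent (GenericField F d r) (fun i => rigidityVec F d r (v i)) ↔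
      LinearIndependent F fun i => vecMulVec (v i) (v i) := by
  rw [linearIndependent_rigidityVec_iff_mulGenericTranspose]
  constructor
  · intro h
    exact (h.restrict_scalars' F).of_comp (mulGenericTranspose F (Fin d) (Fin r) (Fin r))
  · intro h
    obtain ⟨L, L', hL⟩ := exists_linearMap_leftInvOn_of_finrank_le (V' := Fin d → F)
      (Submodule.span F (Set.range v)) (by simpa using hd)
    have hmul (i : ι) : vecMulVec (v i) (v i) * L.toMatrix'ᵀ * L'.toMatrix'ᵀ =
        vecMulVec (v i) (v i) := by
      simp only [vecMulVec_mul, vecMul_transpose, LinearMap.toMatrix'_mulVec,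
        hL (Submodule.subset_span ⟨i, rfl⟩)]
    refine linearIndependent_mulGenericTranspose_of_mul_transpose L.toMatrix'
      (.of_comp (mulRightLinearMap (Fin r) F L'.toMatrix'ᵀ) ?_)
    simpa only [Function.comp_def, mulRightLinearMap_apply, hmul] using h

end RigidityVec

theorem rigidity_stabilization_general (F : Type*) [Field F] (r n : ℕ) (v : Fin n → (Fin r → F))
    (d : ℕ) (hd : finrank F (Submodule.span F (Set.range v)) ≤ d) (A : Set (Fin n)) :
    RigidityIndep F d r n v A ↔
      RigidityIndep F (finrank F (Submodule.span F (Set.range v))) r n v A := by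
  have hA : finrank F (Submodule.span F (Set.range fun i : A => v i)) ≤
      finrank F (Submodule.span F (Set.range v)) :=
    Submodule.finrank_mono (Submodule.span_mono (Set.range_comp_subset_range _ v))
  exact (linearIndependent_rigidityVec_iff_vecMulVec (hA.trans hd)).trans
    (linearIndependent_rigidityVec_iff_vecMulVec hA).symm

/-- **Proposition (stabilization of the rigidity matroids).**
Let `F` be a field and suppose `v 1, …, v n` span `F^r`.  Then for every
integer `d ≥ r` and every `A ⊆ {1,…,n}`, `A` is `d`-rigidity independent if
and only if `A` is `r`-rigidity independent; that is, the tower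
`R¹(M) ⊆ R²(M) ⊆ ⋯` stabilizes at `d = r`. -/
theorem rigidity_stabilization (F : Type*) [Field F] (r n : ℕ)
    (v : Fin n → (Fin r → F)) (hspan : Submodule.span F (Set.range v) = ⊤)
    (d : ℕ) (hd : r ≤ d) (A : Set (Fin n)) :
    RigidityIndep F d r n v A ↔ RigidityIndep F r r n v A := by
  have hrank : finrank F (Submodule.span F (Set.range v)) = r := by
    rw [hspan, finrank_top, finrank_fin_fun]
  simpa only [hrank] using rigidity_stabilization_general F r n v d (hrank.trans_le hd) A
end

section
/- Let F be a field, d a positive integer, and v_1, …, v_n ∈ F^r. If a subset A ⊆ {1,…,n} is d-rigidity independent, then A is (d+1)-rigidity independent; that is, R^d(M) ⊆ R^{d+1}(M). -/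
open scoped TensorProduct

/-!
In coordinates, the vectors `v i ⊗ Φ(v i)` are the rows of a matrix with polynomial entries, so
their independence over the field of rational functions is independence over the polynomial ring.
If `Φ` gains further rows, the old matrix reappears, over a larger polynomial ring, as the block of
columns indexed by the old rows of `Φ`. Enlarging the ring keeps the rows independent, and rows
whose restrictions to some of the columns are independent are themselves independent.
-/

open MvPolynomial

theorem linearIndependent_tmul_iff_mul {R ι m n : Type*} [CommSemiring R] [Finite m] [Finite n]
    (x : ι → m → R) (y : ι → n → R) :
    LinearIndependent R (fun i => x i ⊗ₜ[R] y i) ↔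
      LinearIndependent R (fun i (p : m × n) => x i p.1 * y i p.2) := by
  let e := ((Pi.basisFun R m).tensorProduct (Pi.basisFun R n)).equivFun
  have he : (fun i (p : m × n) => x i p.1 * y i p.2) = e ∘ fun i => x i ⊗ₜ[R] y i := by
    ext i ⟨s, t⟩
    simp [e, mul_comm]
  rw [he]
  exact (e.toLinearMap.linearIndependent_iff_of_injOn e.injective.injOn).symm

theorem linearIndependent_row_map_iff {R S m n : Type*} [CommRing R] [CommRing S] [IsDomain S]
    [Finite n] {f : R →+* S} (hf : Function.Injective f) (M : Matrix m n R) :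
    LinearIndependent S (M.map f).row ↔ LinearIndependent R M.row := by
  algebraize [f]
  have : FaithfulSMul R S := (faithfulSMul_iff_algebraMap_injective R S).2 hf
  exact linearIndependent_algebraMap_comp_iff

theorem linearIndependent_row_of_submatrix_id {R m n n' : Type*} [Semiring R] {M : Matrix m n R}
    (f : n' → n) (h : LinearIndependent R (M.submatrix id f).row) : LinearIndependent R M.row :=
  LinearIndependent.of_comp (LinearMap.funLeft R R f) h

/-- The rigidity matrix of a family `v` of vectors in `R^τ`: its `i`-th row lists the coordinates
of `v i ⊗ Φ(v i)` in the standard basis of `R[Φ]^τ ⊗ R[Φ]^σ`, where `Φ` is the generic `σ × τ`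
matrix. The entries are kept as polynomials rather than rational functions. -/
noncomputable def rigidityMatrix {R ι τ : Type*} [CommSemiring R] [Fintype τ] (σ : Type*)
    (v : ι → τ → R) : Matrix ι (τ × σ) (MvPolynomial (σ × τ) R) :=
  .of fun i p => C (v i p.1) * ∑ t, X (p.2, t) * C (v i t)

namespace rigidityMatrix

theorem linearIndependent_rigidityVec_iff {F ι : Type*} [Field F] {d r : ℕ} (v : ι → Fin r → F) :
    LinearIndependent (GenericField F d r) (fun i => rigidityVec F d r (v i)) ↔
      LinearIndependent (MvPolynomial (Fin d × Fin r) F) (rigidityMatrix (Fin d) v).row := by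
  have hinj := IsFractionRing.injective (MvPolynomial (Fin d × Fin r) F) (GenericField F d r)
  rw [← linearIndependent_row_map_iff hinj]
  simp only [rigidityVec, linearIndependent_tmul_iff_mul, ← map_sum, ← map_mul]
  rfl

theorem map_rename {R ι σ σ' τ : Type*} [CommSemiring R] [Fintype τ] (f : σ → σ')
    (v : ι → τ → R) :
    (rigidityMatrix σ v).map (rename (Prod.map f id)) =
      (rigidityMatrix σ' v).submatrix id (Prod.map id f) := by
  ext1 i p
  simp [rigidityMatrix]

theorem linearIndependent_row_of_injective {R ι σ σ' τ : Type*} [CommRing R] [IsDomain R]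
    [Finite σ] [Fintype τ] {f : σ → σ'} (hf : Function.Injective f) {v : ι → τ → R}
    (h : LinearIndependent (MvPolynomial (σ × τ) R) (rigidityMatrix σ v).row) :
    LinearIndependent (MvPolynomial (σ' × τ) R) (rigidityMatrix σ' v).row := by
  let φ : MvPolynomial (σ × τ) R →+* MvPolynomial (σ' × τ) R := (rename (Prod.map f id)).toRingHom
  have hφ : Function.Injective φ := rename_injective _ (hf.prodMap Function.injective_id)
  have hmap : LinearIndependent _ ((rigidityMatrix σ v).map φ).row :=
    (linearIndependent_row_map_iff hφ _).2 h
  apply linearIndependent_row_of_submatrix_id (Prod.map id f)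
  rwa [← map_rename]

end rigidityMatrix

theorem rigidity_mono_general {F ι : Type*} [Field F] {d e r : ℕ} (hde : d ≤ e)
    {v : ι → Fin r → F}
    (hv : LinearIndependent (GenericField F d r) (fun i => rigidityVec F d r (v i))) :
    LinearIndependent (GenericField F e r) (fun i => rigidityVec F e r (v i)) := by
  rw [rigidityMatrix.linearIndependent_rigidityVec_iff] at hv ⊢
  exact rigidityMatrix.linearIndependent_row_of_injective (Fin.castLE_injective hde) hv

/-- **Proposition (`R^d(M) ⊆ R^{d+1}(M)`).**
Let `F` be a field, `d` a positive integer, and `v 1, …, v n ∈ F^r`.  If a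
subset `A ⊆ {1,…,n}` is `d`-rigidity independent, then `A` is
`(d+1)`-rigidity independent. -/
theorem rigidity_mono (F : Type*) [Field F] (d r n : ℕ) (hd : 0 < d)
    (v : Fin n → (Fin r → F)) (A : Set (Fin n))
    (hA : RigidityIndep F d r n v A) :
    RigidityIndep F (d + 1) r n v A :=
  rigidity_mono_general d.le_succ hA
end
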